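/- arXiv:1212.2302 — 4 statements merged into one kernel-verified Lean document; each statement's English description precedes it below -/
import Mathlib

section
/- Let F be a topological space, let U ⊆ F be open, and let A ⊆ U be closed in F. Let φ : U × [0,1] → F × [0,1] be an open embedding satisfying pr₂ ∘ φ = pr₂ (a product chart about U for the projection to [0,1]). Suppose that for every t ∈ [0,1] there exist an open neighborhood N of t in [0,1] and a homeomorphism ψ : F × N → F × N with pr₂ ∘ ψ = pr₂ and with ψ = φ on A × N. Then there exists a homeomorphism χ : F × [0,1] → F × [0,1] with pr₂ ∘ χ = pr₂ and χ = φ on A × [0,1]. In particular, (F × [0,1]) ∖ φ(A × [0,1]) is homeomorphic to (F ∖ A) × [0,1]. -/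
/-!
The idea is to work with homeomorphisms of the whole of `F × I` over `I` which agree with `φ`
on `A` only over some interval `[a, b]`.

* A chart over `N` and an interval `[a, b] ⊆ N` give such a homeomorphism: freeze the
  parameter outside `[a, b]` by the retraction `I → [a, b]` (`GoodOver.of_local`).
* If `f` is good over `[a, c]` and `g` over `[c, b]`, let `h = g_c⁻¹ ∘ f_c : F → F`. Since
  `f_c` and `g_c` both equal `φ_c` on `A`, `h` fixes `A` pointwise. Hence `g ∘ (h × id)` is still
  good over `[c, b]`, and it agrees with `f` at the parameter `c`, so that the two can be glued
  along `F × {c}` (`GoodOver.glue`).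

A Lebesgue number argument splits `I` into finitely many intervals, each lying in one of the given
neighborhoods, and induction along this partition gives a homeomorphism that is good over `I`.
-/

open Set Topology unitInterval

/-- There is a homeomorphism of `F × I` over `I` whose first coordinate agrees with `u` on
`A × [a, b]`. Over parameters outside `[a, b]` it need not agree with `u`, but it is still
defined there, which avoids homeomorphisms between subspaces. -/
def GoodOver {F : Type*} [TopologicalSpace F] (A : Set F) (u : A → I → F) (a b : I) : Prop :=
  ∃ χ : (F × I) ≃ₜ (F × I), (∀ z, (χ z).2 = z.2) ∧
    ∀ (x : A) (s : I), a ≤ s → s ≤ b → (χ (x, s)).1 = u x s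

theorem Homeomorph.symm_snd_of_snd {X B : Type*} [TopologicalSpace X] [TopologicalSpace B]
    (χ : (X × B) ≃ₜ (X × B)) (h : ∀ z, (χ z).2 = z.2) (z : X × B) :
    (χ.symm z).2 = z.2 := by
  rw [← h, χ.apply_symm_apply]

/-- The chart over `N`, restricted to `[a, b] ⊆ N` and then extended to all of `I` by
precomposing its parameter with the retraction of `I` onto `[a, b]`. -/
theorem GoodOver.of_local {F : Type*} [TopologicalSpace F] {A : Set F} {u : A → I → F}
    {a b : I} (hab : a ≤ b) {N : Set I} (hN : Icc a b ⊆ N) (ψ : (F × N) ≃ₜ (F × N))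
    (hψ : ∀ z, (ψ z).2 = z.2) (hψA : ∀ (x : A) (s : N), (ψ (x, s)).1 = u x s) :
    GoodOver A u a b := by
  have hψ' : ∀ z, (ψ.symm z).2 = z.2 := ψ.symm_snd_of_snd hψ
  let p : I → N := fun s => ⟨projIcc a b hab s, hN (projIcc a b hab s).2⟩
  have hp : Continuous p :=
    (continuous_subtype_val.comp continuous_projIcc).subtype_mk _
  refine ⟨{ toFun := fun z => ((ψ (z.1, p z.2)).1, z.2)
            invFun := fun z => ((ψ.symm (z.1, p z.2)).1, z.2)
            left_inv := ?_
            right_inv := ?_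
            continuous_toFun := by fun_prop
            continuous_invFun := by fun_prop }, fun z => rfl, ?_⟩
  · rintro ⟨x, s⟩
    have : ((ψ (x, p s)).1, p s) = ψ (x, p s) := Prod.ext rfl (hψ (x, p s)).symm
    simp [this]
  · rintro ⟨x, s⟩
    have : ((ψ.symm (x, p s)).1, p s) = ψ.symm (x, p s) := Prod.ext rfl (hψ' (x, p s)).symm
    simp [this]
  · intro x s h1 h2
    have : p s = ⟨s, hN ⟨h1, h2⟩⟩ := by
      apply Subtype.ext
      change (projIcc a b hab s : I) = s
      rw [projIcc_of_mem hab ⟨h1, h2⟩]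
    change (ψ (x, p s)).1 = _
    rw [this, hψA]

/-- The homeomorphism of the fibre over `c` induced by a homeomorphism over `I`. -/
def sliceHomeo {F : Type*} [TopologicalSpace F] (χ : (F × I) ≃ₜ (F × I))
    (h : ∀ z, (χ z).2 = z.2) (c : I) : F ≃ₜ F where
  toFun x := (χ (x, c)).1
  invFun x := (χ.symm (x, c)).1
  left_inv x := by
    have : ((χ (x, c)).1, c) = χ (x, c) := Prod.ext rfl (h (x, c)).symm
    simp [this]
  right_inv x := by
    have : ((χ.symm (x, c)).1, c) = χ.symm (x, c) :=
      Prod.ext rfl (χ.symm_snd_of_snd h (x, c)).symm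
    simp [this]
  continuous_toFun := by fun_prop
  continuous_invFun := by fun_prop

/-- Two homeomorphisms over `I` that agree over the parameter `c` can be spliced there. -/
theorem exists_splice {F : Type*} [TopologicalSpace F] (f g : (F × I) ≃ₜ (F × I))
    (hf : ∀ z, (f z).2 = z.2) (hg : ∀ z, (g z).2 = z.2) (c : I)
    (hc : ∀ x, f (x, c) = g (x, c)) :
    ∃ χ : (F × I) ≃ₜ (F × I), (∀ z, (χ z).2 = z.2) ∧
      (∀ z : F × I, z.2 ≤ c → χ z = f z) ∧ (∀ z : F × I, c ≤ z.2 → χ z = g z) := by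
  have hf' : ∀ z, (f.symm z).2 = z.2 := f.symm_snd_of_snd hf
  have hg' : ∀ z, (g.symm z).2 = z.2 := g.symm_snd_of_snd hg
  have hc1 : ∀ z : F × I, z.2 = c → f z = g z := by
    rintro ⟨x, s⟩ rfl
    exact hc x
  have hc2 : ∀ z : F × I, z.2 = c → f.symm z = g.symm z := by
    intro z hz
    rw [f.symm_apply_eq, hc1 _ ((hg' z).trans hz), g.apply_symm_apply]
  refine ⟨{ toFun := fun z => if z.2 ≤ c then f z else g z
            invFun := fun z => if z.2 ≤ c then f.symm z else g.symm z
            left_inv := ?_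
            right_inv := ?_
            continuous_toFun := f.continuous.if_le g.continuous continuous_snd
              continuous_const hc1
            continuous_invFun := f.symm.continuous.if_le g.symm.continuous continuous_snd
              continuous_const hc2 }, ?_, ?_, ?_⟩
  · intro z
    by_cases h : z.2 ≤ c <;> simp [h, hf, hg]
  · intro z
    by_cases h : z.2 ≤ c <;> simp [h, hf', hg']
  · intro z
    change (if z.2 ≤ c then f z else g z).2 = z.2
    split_ifs <;> simp [hf, hg]
  · intro z h
    exact if_pos h
  · intro z h
    change (if z.2 ≤ c then f z else g z) = g z
    split_ifs with h'
    · exact hc1 z (le_antisymm h' h)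
    · rfl

theorem GoodOver.glue {F : Type*} [TopologicalSpace F] {A : Set F} {u : A → I → F}
    {a c b : I} (hac : a ≤ c) (hcb : c ≤ b) (h1 : GoodOver A u a c) (h2 : GoodOver A u c b) :
    GoodOver A u a b := by
  obtain ⟨f, hf, hfA⟩ := h1
  obtain ⟨g, hg, hgA⟩ := h2
  let h : F ≃ₜ F := (sliceHomeo f hf c).trans (sliceHomeo g hg c).symm
  have hhA : ∀ x : A, h x = x := by
    intro x
    refine (sliceHomeo g hg c).symm_apply_eq.2 ?_
    change (f (x, c)).1 = (g (x, c)).1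
    rw [hfA x c hac le_rfl, hgA x c le_rfl hcb]
  have hh : ∀ x, (g (h x, c)).1 = (f (x, c)).1 := fun x =>
    (sliceHomeo g hg c).apply_symm_apply (sliceHomeo f hf c x)
  obtain ⟨χ, hχ, hχ1, hχ2⟩ := exists_splice f ((h.prodCongr (Homeomorph.refl I)).trans g) hf
    (fun z => hg _) c (fun x => Prod.ext (hh x).symm ((hf _).trans (hg (h x, c)).symm))
  refine ⟨χ, hχ, fun x s has hsb => ?_⟩
  rcases le_total s c with hs | hs
  · rw [hχ1 _ hs, hfA x s has hs]
  · rw [hχ2 _ hs]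
    change (g (h x, s)).1 = _
    rw [hhA, hgA x s hs hsb]

/-- A homeomorphism carrying `A × Y` onto `B` restricts to one of the complements. -/
theorem nonempty_compl_homeo {F Y : Type*} [TopologicalSpace F] [TopologicalSpace Y] {A : Set F}
    {B : Set (F × Y)} (χ : (F × Y) ≃ₜ (F × Y)) (h : ∀ z, χ z ∈ B ↔ z.1 ∈ A) :
    Nonempty (↥(Bᶜ) ≃ₜ (↥(Aᶜ) × Y)) := by
  refine ⟨(χ.subtype (p := fun z => z.1 ∈ Aᶜ) (q := fun z => z ∈ Bᶜ)
    (fun z => (not_congr (h z)).symm)).symm.trans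
    { toFun := fun z => (⟨z.1.1, z.2⟩, z.1.2)
      invFun := fun z => ⟨(z.1, z.2), z.1.2⟩
      left_inv := fun z => rfl
      right_inv := fun z => rfl
      continuous_toFun := by fun_prop
      continuous_invFun := by fun_prop }⟩

/-- Let `F` be a topological space, `U ⊆ F` open, `A ⊆ U` closed in `F`, and let
`φ : U × [0,1] → F × [0,1]` be an open embedding with `pr₂ ∘ φ = pr₂` (a product chart
about `U`).  Suppose that for every `t ∈ [0,1]` there are an open neighborhood `N` of `t`
in `[0,1]` and a homeomorphism `ψ : F × N → F × N` with `pr₂ ∘ ψ = pr₂` and `ψ = φ` on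
`A × N`.  Then there is a homeomorphism `χ : F × [0,1] → F × [0,1]` with `pr₂ ∘ χ = pr₂`
and `χ = φ` on `A × [0,1]`; in particular `(F × [0,1]) ∖ φ(A × [0,1])` is homeomorphic to
`(F ∖ A) × [0,1]`. -/
theorem statement3 (F : Type*) [TopologicalSpace F] (U : Set F) (hU : IsOpen U)
    (A : Set F) (hA : IsClosed A) (hAU : A ⊆ U)
    (φ : U × I → F × I) (hφ : Topology.IsOpenEmbedding φ)
    (hφ2 : ∀ z : U × I, (φ z).2 = z.2)
    (hloc : ∀ t : I, ∃ N : Set I, IsOpen N ∧ t ∈ N ∧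
      ∃ ψ : (F × N) ≃ₜ (F × N),
        (∀ z : F × N, ((ψ z).2 : I) = (z.2 : I)) ∧
        (∀ (a : F) (ha : a ∈ A) (s : N),
          ((ψ (a, s)).1, ((ψ (a, s)).2 : I)) = φ (⟨a, hAU ha⟩, (s : I)))) :
    (∃ χ : (F × I) ≃ₜ (F × I),
      (∀ z : F × I, (χ z).2 = z.2) ∧
      (∀ (a : F) (ha : a ∈ A) (s : I), χ (a, s) = φ (⟨a, hAU ha⟩, s))) ∧
    Nonempty
      ((↥((φ '' {z : U × I | (z.1 : F) ∈ A})ᶜ)) ≃ₜ (↥(Aᶜ) × I)) := by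
  let u : A → I → F := fun x s => (φ (⟨x, hAU x.2⟩, s)).1
  choose N hNo htN ψ hψ hψA using hloc
  have hlocal : ∀ (t a b : I), a ≤ b → Icc a b ⊆ N t → GoodOver A u a b :=
    fun t a b hab hN => GoodOver.of_local hab hN (ψ t) (fun z => Subtype.ext (hψ t z))
      (fun x s => congrArg Prod.fst (hψA t x x.2 s))
  obtain ⟨t, ht0, htm, ⟨n, hn⟩, htN'⟩ := exists_monotone_Icc_subset_open_cover_unitInterval
    hNo (fun s _ => mem_iUnion.2 ⟨s, htN s⟩)
  have hgood : ∀ k, GoodOver A u 0 (t k) := by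
    intro k
    induction k with
    | zero =>
      rw [ht0]
      refine hlocal 0 0 0 le_rfl ?_
      rw [Icc_self, singleton_subset_iff]
      exact htN 0
    | succ k ih =>
      obtain ⟨i, hi⟩ := htN' k
      exact ih.glue nonneg' (htm k.le_succ) (hlocal i _ _ (htm k.le_succ) hi)
  obtain ⟨χ, hχ, hχA⟩ := hgood n
  rw [hn n le_rfl] at hχA
  have hχφ : ∀ (a : F) (ha : a ∈ A) (s : I), χ (a, s) = φ (⟨a, hAU ha⟩, s) :=
    fun a ha s => Prod.ext (hχA ⟨a, ha⟩ s nonneg' le_one') ((hχ _).trans (hφ2 (⟨a, hAU ha⟩, s)).symm)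
  refine ⟨⟨χ, hχ, hχφ⟩, nonempty_compl_homeo χ fun z => ⟨?_, fun hz => ?_⟩⟩
  · rintro ⟨⟨y, s⟩, hy, hz⟩
    have hyz : (↑y, s) = z := χ.injective ((hχφ y hy s).trans hz)
    rw [← hyz]
    exact hy
  · exact ⟨(⟨z.1, hAU hz⟩, z.2), hz, (hχφ z.1 hz z.2).symm⟩
end

section
/- Let M := (S¹ × [−1,1] × ℝ)/((x, s, t) ∼ (x̄, −s, −t)). The map j : S¹ × ℝ → M, j(x, t) = [x, 1, t], is a topological embedding onto the image of S¹ × {−1, 1} × ℝ in M (the boundary of M). Let φ : S¹ × ℝ → S¹ × ℝ be any map of the form φ(x, t) = (f(x), ε·t + c), where f is either z ↦ a·z or z ↦ a·z̄ for some a ∈ S¹, ε ∈ {1, −1}, and c ∈ ℝ (i.e., φ is an isometry of the flat cylinder). Then the adjunction space L₄(φ), obtained from two disjoint copies M₁, M₂ of M by identifying j₁(y) in M₁ with j₂(φ(y)) in M₂ for every y ∈ S¹ × ℝ, is homotopy equivalent to the 2-sphere S². -/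
/-!
The cylinder `S¹ × ℝ` bounds `M`, and every isometry `φ` of it extends to a homeomorphism of `M`:
writing `a = e^{iα}`, the map `[z, s, t] ↦ [e^{iαs} z, s, ε t + c s]` (preceded by
`[z, s, t] ↦ [z̄, s, t]` when `f` is `z ↦ a z̄`) is compatible with the involution and restricts to
`φ` at `s = 1` (`exists_extension`). Hence `L₄(φ)` is homeomorphic to the double of `M`
(`doubleHomeo`).

On the double, the coordinate `t` can be contracted linearly to `0` (`contractHom`), and what is left
is a sphere: sending `[x, s, t]` in the two copies of `M` to
`(Re x, s Im x, ±(1 - |s|)) ∈ ℝ³ \ {0}` and projecting radially to `S²` gives a map that forgets `t`.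
Restricted to the compact slice `t = 0` it is onto (`toSphere_surj`), by the intermediate value
theorem along rays, and its fibres are points of the double (`toSphere_inj`), because the surface
`|v| = (1 - |w|) √(1 - u²)` meets each ray exactly once. So the slice is homeomorphic to `S²`, and the
double retracts onto it by deformation.

That `j` is an embedding follows from the invariant map `[x, s, t] ↦ (Re x + i s Im x, s t)`, whose
composite with `j` is the inclusion `S¹ × ℝ ⊆ ℂ × ℝ`.
-/

open Set Topology

/-- The identification `(x, s, t) ∼ (x̄, −s, −t)` on `S¹ × [−1,1] × ℝ`. -/
def M6Rel :
    Circle × (Set.Icc (-1 : ℝ) 1) × ℝ → Circle × (Set.Icc (-1 : ℝ) 1) × ℝ → Prop :=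
  fun p q => (q.1 : ℂ) = (starRingEnd ℂ) (p.1 : ℂ) ∧
    (q.2.1 : ℝ) = -(p.2.1 : ℝ) ∧ q.2.2 = -p.2.2

/-- `M = (S¹ × [−1,1] × ℝ)/((x, s, t) ∼ (x̄, −s, −t))`. -/
abbrev M6 : Type := Quot M6Rel

/-- `j : S¹ × ℝ → M`, `j(x, t) = [x, 1, t]`. -/
def jMap : Circle × ℝ → M6 :=
  fun y => Quot.mk M6Rel (y.1, ⟨1, by norm_num⟩, y.2)

/-- The image of `S¹ × {−1, 1} × ℝ` in `M` (the boundary of `M`). -/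
def bdM6 : Set M6 :=
  {m | ∃ (z : Circle) (s : Set.Icc (-1 : ℝ) 1) (t : ℝ),
    ((s : ℝ) = 1 ∨ (s : ℝ) = -1) ∧ m = Quot.mk M6Rel (z, s, t)}

/-- The gluing relation producing `L₄(φ)` from two copies of `M`, identifying `j₁ y`
with `j₂ (φ y)` where `φ (x, t) = (f x, ε t + c)`. -/
def L4Rel (f : Circle → Circle) (ε c : ℝ) : M6 ⊕ M6 → M6 ⊕ M6 → Prop :=
  fun u v => ∃ y : Circle × ℝ,
    u = Sum.inl (jMap y) ∧ v = Sum.inr (jMap (f y.1, ε * y.2 + c))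

/-- The unit sphere `S²` of `ℝ³`. -/
abbrev Sphere2 : Type := Metric.sphere (0 : EuclideanSpace ℝ (Fin 3)) 1

/-! ### The involution and the boundary of `M` -/

/-- The cover `S¹ × [−1,1] × ℝ` of `M`. -/
abbrev X6 : Type := Circle × (Set.Icc (-1 : ℝ) 1) × ℝ

/-- The reflection `s ↦ -s` of `[−1,1]`. -/
def negI (s : Set.Icc (-1 : ℝ) 1) : Set.Icc (-1 : ℝ) 1 :=
  ⟨-(s : ℝ), by constructor <;> linarith [s.2.1, s.2.2]⟩

@[simp] lemma coe_negI (s : Set.Icc (-1 : ℝ) 1) : (negI s : ℝ) = -(s : ℝ) := rfl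

/-- The involution `(x, s, t) ↦ (x̄, −s, −t)`; on the circle, conjugation is inversion. -/
noncomputable def inv6 (p : X6) : X6 := (p.1⁻¹, negI p.2.1, -p.2.2)

lemma M6Rel_iff (p q : X6) : M6Rel p q ↔ q = inv6 p := by
  obtain ⟨x, s, t⟩ := p
  obtain ⟨y, r, u⟩ := q
  simp only [M6Rel, inv6, Prod.mk.injEq, Circle.ext_iff, Circle.coe_inv_eq_conj, Subtype.ext_iff,
    coe_negI]

lemma mk_inv6 (p : X6) : (Quot.mk M6Rel (inv6 p) : M6) = Quot.mk M6Rel p :=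
  (Quot.sound ((M6Rel_iff _ _).2 rfl)).symm

lemma continuous_jMap : Continuous jMap :=
  continuous_quot_mk.comp (by fun_prop)

lemma circle_sq (x : Circle) : (x : ℂ).re ^ 2 + (x : ℂ).im ^ 2 = 1 := by
  have h := Circle.normSq_coe x
  rw [Complex.normSq_apply] at h
  nlinarith

lemma circle_inv_re (x : Circle) : ((x⁻¹ : Circle) : ℂ).re = (x : ℂ).re := by
  simp

lemma circle_inv_im (x : Circle) : ((x⁻¹ : Circle) : ℂ).im = -(x : ℂ).im := by
  simp

/-- The invariant map `[x, s, t] ↦ (Re x + i s Im x, s t)`, a left inverse of `j` up to the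
inclusion `S¹ × ℝ ⊆ ℂ × ℝ`. -/
noncomputable def invariantMap : M6 → ℂ × ℝ :=
  Quot.lift (fun p : X6 =>
      (((p.1 : ℂ).re : ℂ) + ((p.2.1 : ℝ) * (p.1 : ℂ).im : ℝ) * Complex.I, (p.2.1 : ℝ) * p.2.2)) (by
    rintro p q h
    obtain rfl := (M6Rel_iff _ _).1 h
    simp [inv6])

lemma continuous_invariantMap : Continuous invariantMap := by
  apply continuous_quot_lift
  fun_prop

lemma isEmbedding_jMap : IsEmbedding jMap := by
  apply IsEmbedding.of_comp continuous_jMap continuous_invariantMap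
  have h : invariantMap ∘ jMap = Prod.map (fun z : Circle => (z : ℂ)) (id : ℝ → ℝ) := by
    funext y
    simp [invariantMap, jMap, Complex.re_add_im, Prod.map]
  rw [h]
  exact IsEmbedding.prodMap IsEmbedding.subtypeVal IsEmbedding.id

/-- A class with `|s| = 1` lies in the image of `j`. -/
lemma exists_jMap (z : Circle) (s : Set.Icc (-1 : ℝ) 1) (t : ℝ)
    (hs : (s : ℝ) = 1 ∨ (s : ℝ) = -1) : ∃ y, jMap y = Quot.mk M6Rel (z, s, t) := by
  rcases hs with hs | hs
  · refine ⟨(z, t), ?_⟩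
    obtain rfl : s = ⟨1, by norm_num⟩ := Subtype.ext hs
    rfl
  · refine ⟨(z⁻¹, -t), ?_⟩
    rw [← mk_inv6 (z, s, t)]
    have : negI s = ⟨1, by norm_num⟩ := Subtype.ext (by simp [hs])
    simp [jMap, inv6, this]

lemma range_jMap : Set.range jMap = bdM6 := by
  ext m
  constructor
  · rintro ⟨y, rfl⟩
    exact ⟨y.1, ⟨1, by norm_num⟩, y.2, Or.inl rfl, rfl⟩
  · rintro ⟨z, s, t, hs, rfl⟩
    exact exists_jMap z s t hs

/-! ### Extending the gluing map over `M` -/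

/-- A homeomorphism of the cover commuting with the involution descends to `M`. -/
noncomputable def descend (e : X6 ≃ₜ X6) (he : ∀ p, e (inv6 p) = inv6 (e p)) : M6 ≃ₜ M6 where
  toFun := Quot.map e (fun p q h => (M6Rel_iff _ _).2 (by rw [(M6Rel_iff _ _).1 h, he]))
  invFun := Quot.map e.symm (fun p q h => (M6Rel_iff _ _).2 (by
    rw [(M6Rel_iff _ _).1 h, e.symm_apply_eq, he, e.apply_symm_apply]))
  left_inv := by rintro ⟨p⟩; simp [Quot.map]
  right_inv := by rintro ⟨p⟩; simp [Quot.map]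
  continuous_toFun := continuous_quot_lift _ (continuous_quot_mk.comp e.continuous)
  continuous_invFun := continuous_quot_lift _ (continuous_quot_mk.comp e.symm.continuous)

/-- `(z, s, t) ↦ (e^{iαs} z, s, ε t + c s)` for `ε² = 1`. -/
noncomputable def twist (α ε c : ℝ) (hε : ε * ε = 1) : X6 ≃ₜ X6 where
  toFun p := (Circle.exp (α * p.2.1) * p.1, p.2.1, ε * p.2.2 + c * p.2.1)
  invFun p := ((Circle.exp (α * p.2.1))⁻¹ * p.1, p.2.1, ε * (p.2.2 - c * p.2.1))
  left_inv := by
    rintro ⟨z, s, t⟩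
    simp only [inv_mul_cancel_left, Prod.mk.injEq, true_and]
    linear_combination t * hε
  right_inv := by
    rintro ⟨z, s, t⟩
    simp only [mul_inv_cancel_left, Prod.mk.injEq, true_and]
    linear_combination (t - c * s) * hε
  continuous_toFun := by fun_prop
  continuous_invFun := by fun_prop

/-- `(z, s, t) ↦ (z̄, s, t)`. -/
noncomputable def conjX : X6 ≃ₜ X6 where
  toFun p := (p.1⁻¹, p.2)
  invFun p := (p.1⁻¹, p.2)
  left_inv := by rintro ⟨z, s, t⟩; simp
  right_inv := by rintro ⟨z, s, t⟩; simp
  continuous_toFun := by fun_prop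
  continuous_invFun := by fun_prop

lemma twist_inv6 (α ε c : ℝ) (hε : ε * ε = 1) (p : X6) :
    twist α ε c hε (inv6 p) = inv6 (twist α ε c hε p) := by
  obtain ⟨z, s, t⟩ := p
  change ((Circle.exp (α * -s) * z⁻¹, negI s, ε * -t + c * -s) : X6) =
    ((Circle.exp (α * s) * z)⁻¹, negI s, -(ε * t + c * s))
  rw [mul_neg, Circle.exp_neg, mul_inv]
  congr 2
  ring

/-- The isometry `(x, t) ↦ (f x, ε t + c)` of the boundary extends to a homeomorphism of `M`. -/
lemma exists_extension (f : Circle → Circle)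
    (hf : ∃ a : Circle, (∀ z : Circle, (f z : ℂ) = (a : ℂ) * (z : ℂ)) ∨
      (∀ z : Circle, (f z : ℂ) = (a : ℂ) * (starRingEnd ℂ) (z : ℂ)))
    (ε c : ℝ) (hε : ε = 1 ∨ ε = -1) :
    ∃ e : M6 ≃ₜ M6, ∀ y : Circle × ℝ, e (jMap y) = jMap (f y.1, ε * y.2 + c) := by
  have hε' : ε * ε = 1 := by rcases hε with rfl | rfl <;> norm_num
  obtain ⟨a, ha⟩ := hf
  have key : Circle.exp (Complex.arg a) = a := Circle.exp_arg a
  rcases ha with ha | ha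
  · refine ⟨descend (twist (Complex.arg a) ε c hε') (twist_inv6 _ _ _ _), fun y => ?_⟩
    have h1 : f y.1 = a * y.1 := Circle.ext (by simpa using ha y.1)
    simp [descend, twist, jMap, Quot.map, key, h1]
  · refine ⟨descend (conjX.trans (twist (Complex.arg a) ε c hε')) (fun p => ?_), fun y => ?_⟩
    · have h : conjX (inv6 p) = inv6 (conjX p) := rfl
      simp only [Homeomorph.trans_apply]
      rw [h, twist_inv6]
    · have h1 : f y.1 = a * y.1⁻¹ := Circle.ext (by
        rw [ha, Circle.coe_mul, Circle.coe_inv_eq_conj])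
      simp [descend, twist, conjX, jMap, Quot.map, key, h1]

/-- The double of `M`: the adjunction space for the identity of the boundary. -/
abbrev Double6 : Type := Quot (L4Rel id 1 0)

lemma L4Rel_id_iff (u v : M6 ⊕ M6) :
    L4Rel id 1 0 u v ↔ ∃ y, u = Sum.inl (jMap y) ∧ v = Sum.inr (jMap y) := by
  simp [L4Rel]

lemma double_glue (y : Circle × ℝ) :
    (Quot.mk _ (Sum.inl (jMap y)) : Double6) = Quot.mk _ (Sum.inr (jMap y)) :=
  Quot.sound ((L4Rel_id_iff _ _).2 ⟨y, rfl, rfl⟩)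

/-- If the gluing map extends to a homeomorphism `e` of `M`, then the adjunction space is
homeomorphic to the double. -/
noncomputable def doubleHomeo (f : Circle → Circle) (ε c : ℝ) (e : M6 ≃ₜ M6)
    (he : ∀ y : Circle × ℝ, e (jMap y) = jMap (f y.1, ε * y.2 + c)) :
    Quot (L4Rel f ε c) ≃ₜ Double6 where
  toFun := Quot.map (Sum.map id e.symm) (by
    rintro u v ⟨y, rfl, rfl⟩
    refine (L4Rel_id_iff _ _).2 ⟨y, rfl, ?_⟩
    simp [← he])
  invFun := Quot.map (Sum.map id e) (by
    rintro u v h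
    obtain ⟨y, rfl, rfl⟩ := (L4Rel_id_iff _ _).1 h
    exact ⟨y, rfl, by simp [← he]⟩)
  left_inv := by rintro ⟨u | u⟩ <;> simp [Quot.map]
  right_inv := by rintro ⟨u | u⟩ <;> simp [Quot.map]
  continuous_toFun := continuous_quot_lift _
    (continuous_quot_mk.comp (continuous_id.sumMap e.symm.continuous))
  continuous_invFun := continuous_quot_lift _
    (continuous_quot_mk.comp (continuous_id.sumMap e.continuous))

/-! ### The map from the double to the sphere -/

/-- The point `(Re x, s Im x, η (1 - |s|))` of `ℝ³`; `η = ±1` distinguishes the two copies of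
`M`. -/
noncomputable def rawPt (η : ℝ) (x : Circle) (s : ℝ) : EuclideanSpace ℝ (Fin 3) :=
  !₂[(x : ℂ).re, s * (x : ℂ).im, η * (1 - |s|)]

lemma rawPt_ne_zero (η : ℝ) (hη : |η| = 1) (x : Circle) (s : ℝ) : rawPt η x s ≠ 0 := by
  intro h
  have h0 : (x : ℂ).re = 0 := by simpa [rawPt] using congrArg (fun v => v 0) h
  have h1 : s * (x : ℂ).im = 0 := by simpa [rawPt] using congrArg (fun v => v 1) h
  have h2 : η * (1 - |s|) = 0 := by simpa [rawPt] using congrArg (fun v => v 2) h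
  have hη0 : η ≠ 0 := by rintro rfl; simp at hη
  have h3 : |s| = 1 := by
    rcases mul_eq_zero.1 h2 with h | h
    · exact absurd h hη0
    · linarith
  have hs : s ≠ 0 := by rintro rfl; simp at h3
  have h4 : (x : ℂ).im = 0 := (mul_eq_zero.1 h1).resolve_left hs
  have := circle_sq x
  rw [h0, h4] at this
  norm_num at this

/-- Radial projection of `rawPt` to the unit sphere. -/
noncomputable def spherePt (η : ℝ) (hη : |η| = 1) (x : Circle) (s : ℝ) : Sphere2 :=
  ⟨‖rawPt η x s‖⁻¹ • rawPt η x s, by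
    rw [mem_sphere_zero_iff_norm, norm_smul, norm_inv, norm_norm,
      inv_mul_cancel₀ (norm_ne_zero_iff.2 (rawPt_ne_zero η hη x s))]⟩

lemma continuous_rawPt (η : ℝ) : Continuous fun p : Circle × ℝ => rawPt η p.1 p.2 := by
  unfold rawPt
  refine (PiLp.continuous_toLp 2 _).comp (continuous_pi fun i => ?_)
  fin_cases i
  · simp only [Fin.zero_eta, Matrix.cons_val_zero]; fun_prop
  · simp only [Fin.mk_one, Matrix.cons_val_one, Matrix.cons_val_zero]; fun_prop
  · simp only [Fin.reduceFinMk, Matrix.cons_val]; fun_prop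

lemma continuous_spherePt (η : ℝ) (hη : |η| = 1) :
    Continuous fun p : Circle × ℝ => spherePt η hη p.1 p.2 := by
  have h := continuous_rawPt η
  exact Continuous.subtype_mk
    ((h.norm.inv₀ fun p => norm_ne_zero_iff.2 (rawPt_ne_zero η hη p.1 p.2)).smul h) _

lemma spherePt_inv (η : ℝ) (hη : |η| = 1) (x : Circle) (s : ℝ) :
    spherePt η hη x⁻¹ (-s) = spherePt η hη x s := by
  have : rawPt η x⁻¹ (-s) = rawPt η x s := by
    simp only [rawPt, circle_inv_re, circle_inv_im, abs_neg, neg_mul_neg]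
  simp only [spherePt, this]

/-- The map `[x, s, t] ↦ spherePt η x s` on one copy of `M`. -/
noncomputable def sphereM (η : ℝ) (hη : |η| = 1) : M6 → Sphere2 :=
  Quot.lift (fun p : X6 => spherePt η hη p.1 p.2.1) (by
    rintro p q h
    obtain rfl := (M6Rel_iff _ _).1 h
    exact (spherePt_inv η hη _ _).symm)

lemma continuous_sphereM (η : ℝ) (hη : |η| = 1) : Continuous (sphereM η hη) :=
  continuous_quot_lift _
    ((continuous_spherePt η hη).comp (f := fun p : X6 => (p.1, (p.2.1 : ℝ))) (by fun_prop))

lemma abs_neg_one' : |(-1 : ℝ)| = 1 := by norm_num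

/-- The map from the double of `M` to `S²`, one copy of `M` going to each hemisphere. -/
noncomputable def toSphere : Double6 → Sphere2 :=
  Quot.lift (Sum.elim (sphereM 1 abs_one) (sphereM (-1) abs_neg_one')) (by
    rintro u v h
    obtain ⟨y, rfl, rfl⟩ := (L4Rel_id_iff _ _).1 h
    simp [sphereM, jMap, spherePt, rawPt])

lemma continuous_toSphere : Continuous toSphere :=
  continuous_quot_lift _ ((continuous_sphereM _ _).sumElim (continuous_sphereM _ _))

/-! ### The slice `t = 0` -/

/-- A compact cover of the slice `t = 0` of the double. -/
abbrev Slice6 : Type := (Circle × (Set.Icc (-1 : ℝ) 1)) ⊕ (Circle × (Set.Icc (-1 : ℝ) 1))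

/-- The map of the compact cover onto the slice `t = 0` of the double. -/
def slice : Slice6 → Double6 := fun p =>
  Quot.mk _ (Sum.map (fun q => (Quot.mk M6Rel (q.1, q.2, 0) : M6))
    (fun q => (Quot.mk M6Rel (q.1, q.2, 0) : M6)) p)

lemma continuous_slice : Continuous slice :=
  continuous_quot_mk.comp (Continuous.sumMap (continuous_quot_mk.comp (by fun_prop))
    (continuous_quot_mk.comp (by fun_prop)))

/-- The surface `|v| = (1 - |w|) √(1 - u²)` meets a ray at most once, here in terms of the
scaling factor `l` between two of its points (with `h = |w|`, `g = |s|` and `y = Im x`). -/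
lemma scale_le_one {u y g h u' y' g' h' l : ℝ} (hl : 0 < l)
    (hg0 : 0 ≤ g) (hg0' : 0 ≤ g') (hh' : 0 ≤ h') (hgh : g + h = 1)
    (hgh' : g' + h' = 1) (hc : u ^ 2 + y ^ 2 = 1) (hc' : u' ^ 2 + y' ^ 2 = 1)
    (hu : u' = l * u) (hv : g' * |y'| = l * (g * |y|)) (hw : h' = l * h) : l ≤ 1 := by
  by_contra! hl1
  have hh : 0 ≤ h := by
    by_contra! hneg
    nlinarith
  have h1 : g' ≤ g := by nlinarith
  have hl2 : 1 < l ^ 2 := by nlinarith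
  have h2 : |y'| ≤ |y| := by
    apply sq_le_sq.1
    subst hu
    nlinarith [sq_nonneg u]
  have h3 : g' * |y'| ≤ g * |y| := mul_le_mul h1 h2 (abs_nonneg _) hg0
  have h4 : 0 ≤ g * |y| := mul_nonneg hg0 (abs_nonneg _)
  have h5 : g * |y| = 0 := by nlinarith
  rcases mul_eq_zero.1 h5 with h6 | h6
  · nlinarith
  · have hy : y = 0 := abs_eq_zero.1 h6
    subst hy
    subst hu
    nlinarith [sq_nonneg y']

/-- For `|s| ≤ 1`, a point of the form `rawPt η x s` is determined by its radial projection. -/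
lemma rawPt_eq_of_spherePt_eq {η η' : ℝ} (hη : |η| = 1) (hη' : |η'| = 1) {x x' : Circle}
    {s s' : ℝ} (hs : |s| ≤ 1) (hs' : |s'| ≤ 1)
    (h : spherePt η hη x s = spherePt η' hη' x' s') : rawPt η x s = rawPt η' x' s' := by
  -- the inequality for the scaling factor, used in both directions
  have key : ∀ {η η' : ℝ} (_ : |η| = 1) (_ : |η'| = 1) {x x' : Circle} {s s' : ℝ} (_ : |s| ≤ 1)
      (_ : |s'| ≤ 1) (l : ℝ), 0 < l → rawPt η' x' s' = l • rawPt η x s → l ≤ 1 := by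
    intro η η' hη hη' x x' s s' hs hs' l hl h
    have h0 : (x' : ℂ).re = l * (x : ℂ).re := by
      simpa [rawPt] using congrArg (fun v => v 0) h
    have h1 : s' * (x' : ℂ).im = l * (s * (x : ℂ).im) := by
      simpa [rawPt] using congrArg (fun v => v 1) h
    have h2 : η' * (1 - |s'|) = l * (η * (1 - |s|)) := by
      simpa [rawPt] using congrArg (fun v => v 2) h
    have h1' := congrArg abs h1
    have h2' := congrArg abs h2
    simp only [abs_mul, hη, hη', abs_of_pos hl, one_mul, abs_of_nonneg (sub_nonneg.2 hs),
      abs_of_nonneg (sub_nonneg.2 hs')] at h1' h2'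
    exact scale_le_one hl (abs_nonneg s) (abs_nonneg s') (sub_nonneg.2 hs')
      (by ring) (by ring) (circle_sq x) (circle_sq x') h0 h1' h2'
  have hv := congrArg Subtype.val h
  simp only [spherePt] at hv
  have hp := norm_pos_iff.2 (rawPt_ne_zero η hη x s)
  have hp' := norm_pos_iff.2 (rawPt_ne_zero η' hη' x' s')
  have e1 : rawPt η' x' s' = (‖rawPt η' x' s'‖ / ‖rawPt η x s‖) • rawPt η x s := by
    rw [div_eq_mul_inv, mul_smul, hv, smul_inv_smul₀ hp'.ne']
  have e2 : rawPt η x s = (‖rawPt η x s‖ / ‖rawPt η' x' s'‖) • rawPt η' x' s' := by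
    rw [div_eq_mul_inv, mul_smul, ← hv, smul_inv_smul₀ hp.ne']
  have l1 := key hη hη' hs hs' _ (by positivity) e1
  have l2 := key hη' hη hs' hs _ (by positivity) e2
  rw [div_le_one (by positivity)] at l1 l2
  have : ‖rawPt η' x' s'‖ / ‖rawPt η x s‖ = 1 := by
    rw [le_antisymm l1 l2, div_self hp.ne']
  rw [this, one_smul] at e1
  exact e1.symm

lemma abs_coe_le (s : Set.Icc (-1 : ℝ) 1) : |(s : ℝ)| ≤ 1 := abs_le.2 s.2

/-- `(Re x, s Im x, |s|)` separates the points of the slice `t = 0` of `M`. -/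
lemma mk_eq_of_invariants {x x' : Circle} {s s' : Set.Icc (-1 : ℝ) 1}
    (h0 : (x : ℂ).re = (x' : ℂ).re) (h1 : (s : ℝ) * (x : ℂ).im = s' * (x' : ℂ).im)
    (h2 : |(s : ℝ)| = |(s' : ℝ)|) :
    (Quot.mk M6Rel (x, s, 0) : M6) = Quot.mk M6Rel (x', s', 0) := by
  have hc := circle_sq x
  have hc' := circle_sq x'
  have hy : (x : ℂ).im ^ 2 = (x' : ℂ).im ^ 2 := by rw [h0] at hc; linarith
  have same : (s : ℝ) = s' → (x : ℂ).im = (x' : ℂ).im →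
      (Quot.mk M6Rel (x, s, 0) : M6) = Quot.mk M6Rel (x', s', 0) := by
    intro a b
    rw [Subtype.ext a, Circle.ext (Complex.ext h0 b)]
  have opp : (s' : ℝ) = -s → (x' : ℂ).im = -(x : ℂ).im →
      (Quot.mk M6Rel (x, s, 0) : M6) = Quot.mk M6Rel (x', s', 0) := by
    intro a b
    rw [← mk_inv6 (x, s, 0)]
    have e1 : x⁻¹ = x' := Circle.ext (Complex.ext (by rw [circle_inv_re, h0])
      (by rw [circle_inv_im, b]))
    have e2 : negI s = s' := Subtype.ext (by rw [coe_negI, a])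
    simp [inv6, e1, e2]
  rcases abs_eq_abs.1 h2 with a | a <;> rcases sq_eq_sq_iff_eq_or_eq_neg.1 hy with b | b
  · exact same a b
  · have h3 : (s' : ℝ) * (x' : ℂ).im = 0 := by rw [a, b] at h1; linarith
    rcases mul_eq_zero.1 h3 with h | h
    · exact opp (by rw [a, h, neg_zero]) (by rw [b, neg_neg])
    · exact same a (by rw [b, h, neg_zero])
  · have h3 : (s' : ℝ) * (x' : ℂ).im = 0 := by rw [a, b] at h1; linarith
    rcases mul_eq_zero.1 h3 with h | h
    · exact same (by rw [a, h, neg_zero]) b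
    · exact opp (by rw [a, neg_neg]) (by rw [b, h, neg_zero])
  · exact opp (by rw [a, neg_neg]) (by rw [b, neg_neg])

lemma toSphere_inj (p q : Slice6) (h : toSphere (slice p) = toSphere (slice q)) :
    slice p = slice q := by
  have main : ∀ {η η' : ℝ} (hη : |η| = 1) (hη' : |η'| = 1) {x x' : Circle}
      {s s' : Set.Icc (-1 : ℝ) 1}, spherePt η hη x s = spherePt η' hη' x' s' →
      (Quot.mk M6Rel (x, s, 0) : M6) = Quot.mk M6Rel (x', s', 0) ∧
        η * (1 - |(s : ℝ)|) = η' * (1 - |(s' : ℝ)|) := by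
    intro η η' hη hη' x x' s s' h
    have h := rawPt_eq_of_spherePt_eq hη hη' (abs_coe_le s) (abs_coe_le s') h
    have h0 : (x : ℂ).re = (x' : ℂ).re := by
      simpa [rawPt] using congrArg (fun v => v 0) h
    have h1 : (s : ℝ) * (x : ℂ).im = s' * (x' : ℂ).im := by
      simpa [rawPt] using congrArg (fun v => v 1) h
    have h2 : η * (1 - |(s : ℝ)|) = η' * (1 - |(s' : ℝ)|) := by
      have := congrArg (fun v => v 2) h
      simpa only [rawPt, PiLp.toLp_apply, Matrix.cons_val] using this
    refine ⟨mk_eq_of_invariants h0 h1 ?_, h2⟩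
    have h3 := congrArg abs h2
    simp only [abs_mul, hη, hη', one_mul, abs_of_nonneg (sub_nonneg.2 (abs_coe_le _))] at h3
    linarith
  -- points of different copies with the same image lie on the common boundary
  have glue : ∀ {x x' : Circle} {s s' : Set.Icc (-1 : ℝ) 1},
      spherePt 1 abs_one x s = spherePt (-1) abs_neg_one' x' s' →
      slice (Sum.inl (x, s)) = slice (Sum.inr (x', s')) := by
    intro x x' s s' h
    obtain ⟨e, h2⟩ := main _ _ h
    have hs : |(s : ℝ)| = 1 := by linarith [abs_coe_le s, abs_coe_le s']
    obtain ⟨y, hy⟩ := exists_jMap x s 0 (eq_or_eq_neg_of_abs_eq hs)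
    simp only [slice, Sum.map_inl, Sum.map_inr]
    rw [← e, ← hy, double_glue]
  rcases p with ⟨x, s⟩ | ⟨x, s⟩ <;> rcases q with ⟨x', s'⟩ | ⟨x', s'⟩
  · simp only [slice, Sum.map_inl]
    rw [(main abs_one abs_one h).1]
  · exact glue h
  · exact (glue h.symm).symm
  · simp only [slice, Sum.map_inr]
    rw [(main abs_neg_one' abs_neg_one' h).1]

/-- Every ray meets the surface `|v| = (1 - |w|) √(1 - u²)`. -/
lemma exists_scale (u v w : ℝ) (h : u ^ 2 + v ^ 2 + w ^ 2 = 1) :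
    ∃ l : ℝ, 0 < l ∧ l * |u| ≤ 1 ∧ l * |w| ≤ 1 ∧
      l * |v| = (1 - l * |w|) * √(1 - (l * u) ^ 2) := by
  obtain ⟨m, hm, hum, hvm, hwm, hor⟩ : ∃ m : ℝ, 0 < m ∧ |u| ≤ m ∧ |v| ≤ m ∧ |w| ≤ m ∧
      (m = |u| ∨ m = |v| ∨ m = |w|) := by
    refine ⟨max |u| (max |v| |w|), ?_, by simp, by simp, by simp, ?_⟩
    · by_contra! hc
      simp only [max_le_iff, abs_nonpos_iff] at hc
      obtain ⟨rfl, rfl, rfl⟩ := hc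
      norm_num at h
    · rcases max_choice |u| (max |v| |w|) with e | e
      · exact Or.inl e
      · rw [e]
        exact Or.inr (max_choice |v| |w|)
  have hcont : ContinuousOn (fun l : ℝ => (1 - l * |w|) * √(1 - (l * u) ^ 2) - l * |v|)
      (Icc 0 m⁻¹) := by fun_prop
  have hend : (1 - m⁻¹ * |w|) * √(1 - (m⁻¹ * u) ^ 2) - m⁻¹ * |v| ≤ 0 := by
    have hv0 : 0 ≤ m⁻¹ * |v| := by positivity
    rcases hor with e | e | e
    · have : (m⁻¹ * u) ^ 2 = 1 := by
        rw [mul_pow, ← sq_abs u, ← e, ← mul_pow, inv_mul_cancel₀ hm.ne', one_pow]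
      rw [this]
      simpa using hv0
    · have e1 : m⁻¹ * |v| = 1 := by rw [← e, inv_mul_cancel₀ hm.ne']
      have e2 : √(1 - (m⁻¹ * u) ^ 2) ≤ 1 := by
        rw [Real.sqrt_le_one]
        nlinarith [sq_nonneg (m⁻¹ * u)]
      have e3 : 0 ≤ m⁻¹ * |w| := by positivity
      nlinarith [Real.sqrt_nonneg (1 - (m⁻¹ * u) ^ 2)]
    · have : m⁻¹ * |w| = 1 := by rw [← e, inv_mul_cancel₀ hm.ne']
      rw [this]
      simpa using hv0
  have hm' : 0 ≤ m⁻¹ := by positivity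
  obtain ⟨l, hl, hl0⟩ := intermediate_value_Icc' hm' hcont
    (show (0 : ℝ) ∈ _ from ⟨hend, by simp⟩)
  have hlm : l * m ≤ 1 := by
    have := mul_le_mul_of_nonneg_right hl.2 hm.le
    rwa [inv_mul_cancel₀ hm.ne'] at this
  refine ⟨l, lt_of_le_of_ne hl.1 ?_, ?_, ?_, ?_⟩
  · rintro rfl
    simp at hl0
  · exact (mul_le_mul_of_nonneg_left hum hl.1).trans hlm
  · exact (mul_le_mul_of_nonneg_left hwm hl.1).trans hlm
  · simp only at hl0
    linarith

lemma toSphere_surj (p : Sphere2) : ∃ q : Slice6, toSphere (slice q) = p := by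
  obtain ⟨p, hp⟩ := p
  have hn : ‖p‖ = 1 := mem_sphere_zero_iff_norm.1 hp
  have h : p 0 ^ 2 + p 1 ^ 2 + p 2 ^ 2 = 1 := by
    have := EuclideanSpace.norm_sq_eq p
    rw [hn, Fin.sum_univ_three] at this
    simp only [Real.norm_eq_abs, sq_abs] at this
    linarith
  obtain ⟨l, hl, hu, hw, hv⟩ := exists_scale _ _ _ h
  have hu2 : (l * p 0) ^ 2 ≤ 1 := by
    rw [← sq_abs, abs_mul, abs_of_pos hl]
    exact pow_le_one₀ (by positivity) hu
  have hx : (⟨l * p 0, √(1 - (l * p 0) ^ 2)⟩ : ℂ) ∈ Submonoid.unitSphere ℂ := by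
    rw [Submonoid.unitSphere, Submonoid.mem_mk, Subsemigroup.mem_mk, mem_sphere_zero_iff_norm, ← sq_eq_sq₀ (norm_nonneg _) zero_le_one, Complex.sq_norm,
      Complex.normSq_mk]
    have := Real.mul_self_sqrt (sub_nonneg.2 hu2)
    nlinarith
  let x : Circle := ⟨_, hx⟩
  have hxre : (x : ℂ).re = l * p 0 := rfl
  have hxim : (x : ℂ).im = √(1 - (l * p 0) ^ 2) := rfl
  -- the coordinate `s` carries the sign of `v`
  obtain ⟨s, hs, hsv⟩ : ∃ s : Set.Icc (-1 : ℝ) 1, |(s : ℝ)| = 1 - l * |p 2| ∧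
      (s : ℝ) * (x : ℂ).im = l * p 1 := by
    have h0 : 0 ≤ l * |p 2| := by positivity
    rcases le_total 0 (p 1) with h1 | h1
    · refine ⟨⟨1 - l * |p 2|, by constructor <;> linarith⟩, ?_, ?_⟩
      · exact abs_of_nonneg (by linarith)
      · rw [hxim, ← hv, abs_of_nonneg h1]
    · refine ⟨⟨-(1 - l * |p 2|), by constructor <;> linarith⟩, ?_, ?_⟩
      · rw [abs_neg]
        exact abs_of_nonneg (by linarith)
      · rw [hxim, neg_mul, ← hv, abs_of_nonpos h1]
        ring
  have key : ∀ (η : ℝ) (hη : |η| = 1), η * |p 2| = p 2 → spherePt η hη x s = ⟨p, hp⟩ := by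
    intro η hη h2
    have e : rawPt η x s = l • p := by
      ext i
      fin_cases i
      · simp [rawPt, hxre]
      · simp [rawPt, hsv]
      · simp only [rawPt, hs, Fin.reduceFinMk, PiLp.toLp_apply, Matrix.cons_val, PiLp.smul_apply,
          smul_eq_mul]
        linear_combination l * h2
    apply Subtype.ext
    simp only [spherePt, e, norm_smul, hn, Real.norm_eq_abs, abs_of_pos hl, mul_one]
    rw [inv_smul_smul₀ hl.ne']
  rcases le_total 0 (p 2) with h2 | h2
  · exact ⟨Sum.inl (x, s), key 1 abs_one (by rw [abs_of_nonneg h2, one_mul])⟩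
  · exact ⟨Sum.inr (x, s), key (-1) abs_neg_one' (by rw [abs_of_nonpos h2]; ring)⟩

/-! ### The deformation onto the slice -/

/-- The homotopy `[x, s, t] ↦ [x, s, (1 - τ) t]` of `M`, in curried form so that it can be defined
on the quotient. -/
noncomputable def contractM : M6 → C(unitInterval, M6) :=
  Quot.lift (fun p : X6 => (⟨fun τ : unitInterval =>
      Quot.mk M6Rel (p.1, p.2.1, (1 - (τ : ℝ)) * p.2.2),
      continuous_quot_mk.comp (by fun_prop)⟩ : C(unitInterval, M6))) (by
    rintro p q h
    obtain rfl := (M6Rel_iff _ _).1 h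
    ext τ
    rw [ContinuousMap.coe_mk, ContinuousMap.coe_mk, ← mk_inv6]
    simp [inv6])

lemma continuous_contractM : Continuous contractM := by
  apply continuous_quot_lift
  exact (ContinuousMap.curry (⟨fun p : X6 × unitInterval =>
    (Quot.mk M6Rel (p.1.1, p.1.2.1, (1 - (p.2 : ℝ)) * p.1.2.2) : M6),
    continuous_quot_mk.comp (by fun_prop)⟩ : C(X6 × unitInterval, M6))).continuous

/-- The inclusion of the first copy of `M` in the double. -/
def inclL : C(M6, Double6) :=
  ⟨fun m => Quot.mk _ (Sum.inl m), continuous_quot_mk.comp continuous_inl⟩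

/-- The inclusion of the second copy of `M` in the double. -/
def inclR : C(M6, Double6) :=
  ⟨fun m => Quot.mk _ (Sum.inr m), continuous_quot_mk.comp continuous_inr⟩

/-- The contraction of the coordinate `t` on the double, in curried form. -/
noncomputable def contractD : Double6 → C(unitInterval, Double6) :=
  Quot.lift (Sum.elim (fun m => inclL.comp (contractM m)) (fun m => inclR.comp (contractM m))) (by
    rintro u v h
    obtain ⟨y, rfl, rfl⟩ := (L4Rel_id_iff _ _).1 h
    ext τ
    exact double_glue (y.1, (1 - (τ : ℝ)) * y.2))

lemma continuous_contractD : Continuous contractD :=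
  continuous_quot_lift _
    (((ContinuousMap.continuous_postcomp inclL).comp continuous_contractM).sumElim
      ((ContinuousMap.continuous_postcomp inclR).comp continuous_contractM))

/-- The contraction of the coordinate `t` on the double. -/
noncomputable def contractHom : C(Double6 × unitInterval, Double6) :=
  ContinuousMap.uncurry ⟨contractD, continuous_contractD⟩

lemma contractHom_zero (d : Double6) : contractHom (d, 0) = d := by
  rcases d with ⟨m | m⟩ <;> obtain ⟨⟨x, s, t⟩, rfl⟩ := Quot.exists_rep m <;>
    simp [contractHom, contractD, contractM, inclL, inclR]

/-- The contraction ends in the slice, and the map to the sphere ignores it. -/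
lemma contractHom_one (d : Double6) :
    ∃ q : Slice6, contractHom (d, 1) = slice q ∧ toSphere (slice q) = toSphere d := by
  rcases d with ⟨m | m⟩ <;> obtain ⟨⟨x, s, t⟩, rfl⟩ := Quot.exists_rep m
  · exact ⟨Sum.inl (x, s), by simp [contractHom, contractD, contractM, inclL, slice], rfl⟩
  · exact ⟨Sum.inr (x, s), by simp [contractHom, contractD, contractM, inclR, slice], rfl⟩

lemma isQuotientMap_slice : IsQuotientMap (toSphere ∘ slice) :=
  IsQuotientMap.of_surjective_continuous (fun p => toSphere_surj p)
    (continuous_toSphere.comp continuous_slice)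

lemma double_homotopyEquiv : Nonempty (ContinuousMap.HomotopyEquiv Double6 Sphere2) := by
  choose r hr using toSphere_surj
  have hG : ∀ q, slice (r (toSphere (slice q))) = slice q := fun q => toSphere_inj _ _ (hr _)
  -- the inverse picks the point of the slice above a point of the sphere
  have hc : Continuous fun p => slice (r p) := by
    rw [isQuotientMap_slice.continuous_iff]
    exact continuous_slice.congr fun q => (hG q).symm
  let F : C(Double6, Sphere2) := ⟨toSphere, continuous_toSphere⟩
  let G : C(Sphere2, Double6) := ⟨fun p => slice (r p), hc⟩
  refine ⟨⟨F, G, ?_, ?_⟩⟩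
  · refine ContinuousMap.Homotopic.symm ⟨⟨contractHom.comp ContinuousMap.prodSwap, ?_, ?_⟩⟩
    · intro d
      exact contractHom_zero d
    · intro d
      obtain ⟨q, h1, h2⟩ := contractHom_one d
      change contractHom (d, 1) = slice (r (toSphere d))
      rw [h1, ← h2, hG]
  · have : F.comp G = ContinuousMap.id _ := by
      ext1 p
      exact hr p
    rw [this]

/-- The map `j(x, t) = [x, 1, t]` is a topological embedding of `S¹ × ℝ` onto the image of
`S¹ × {−1, 1} × ℝ` in `M = (S¹ × [−1,1] × ℝ)/((x, s, t) ∼ (x̄, −s, −t))`; and for any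
isometry `φ(x, t) = (f x, ε t + c)` of the flat cylinder — where `f` is `z ↦ a z` or
`z ↦ a z̄` for some `a ∈ S¹`, `ε ∈ {1, −1}`, `c ∈ ℝ` — the adjunction space `L₄(φ)`,
obtained from two copies of `M` by identifying `j₁ y` with `j₂ (φ y)`, is homotopy
equivalent to the `2`-sphere `S²`. -/
theorem statement6 (f : Circle → Circle)
    (hf : ∃ a : Circle, (∀ z : Circle, (f z : ℂ) = (a : ℂ) * (z : ℂ)) ∨
      (∀ z : Circle, (f z : ℂ) = (a : ℂ) * (starRingEnd ℂ) (z : ℂ)))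
    (ε c : ℝ) (hε : ε = 1 ∨ ε = -1) :
    (Topology.IsEmbedding jMap ∧ Set.range jMap = bdM6) ∧
    Nonempty (ContinuousMap.HomotopyEquiv (Quot (L4Rel f ε c)) Sphere2) := by
  obtain ⟨e, he⟩ := exists_extension f hf ε c hε
  obtain ⟨E⟩ := double_homotopyEquiv
  exact ⟨⟨isEmbedding_jMap, range_jMap⟩,
    ⟨(doubleHomeo f ε c e he).toHomotopyEquiv.trans E⟩⟩
end

section
/- Let M_pt := (S¹ × ℝ²)/((z, y) ∼ (z̄, −y)) and K := ℝ²/(y ∼ −y), and let p : M_pt → K be the induced projection p[z, y] = [y], with o := [0] ∈ K. Then: (a) the restriction of p to p⁻¹(K ∖ {o}) → K ∖ {o} is a locally trivial fiber bundle all of whose fibers are homeomorphic to the circle S¹; (b) the fiber p⁻¹(o) is homeomorphic to the closed interval [0, 1], and its two endpoints are p₊ = [(1, 0)] and p₋ = [(−1, 0)]; (c) for every r > 0 the preimage p⁻¹({[y] : ‖y‖ = r}) is homeomorphic to the Klein bottle K². -/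
/-!
Every class `[z, y]` with `y ≠ 0` has exactly two representatives `(z, y)` and `(z̄, -y)`. Fix
`c ≠ 0` and let `N ⊆ K` be the set of classes `[y]` with `⟨y, c⟩ ≠ 0`. Over `N` one may choose the
representative with `⟨y, c⟩ > 0`; this choice is continuous, because the sign of `⟨y, c⟩` is locally
constant there, and so it gives a homeomorphism `p⁻¹(N) ≅ S¹ × N` over `N` (`trivOver_pMap`). The
sets `N` cover `K ∖ {o}`, which is (a).

Over `o` the class `[z, 0]` only remembers `z` up to conjugation, that is, `Re z`. The map
`[z, 0] ↦ (1 - Re z) / 2` has the continuous inverse `x ↦ [exp (i arccos (1 - 2 x)), 0]`, which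
is (b).

For (c), the map `[z, w] ↦ [z, r w]` from the Klein bottle has the inverse `[z, y] ↦ [z, y / ‖y‖]`,
continuous on the open set `y ≠ 0`.

Compactness and Hausdorff arguments are avoided by giving every inverse explicitly; continuity of
functions on open subsets of `M_pt` and `K` is checked after composing with the quotient map.
-/

open Metric Filter Topology Set

/-- The identification `(z, y) ∼ (z̄, −y)` on `S¹ × ℝ²` (with `ℝ²` realized as `ℂ`). -/
def MptRel : Circle × ℂ → Circle × ℂ → Prop :=
  fun p q => (q.1 : ℂ) = (starRingEnd ℂ) (p.1 : ℂ) ∧ q.2 = -p.2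

/-- `M_pt = (S¹ × ℝ²)/((z, y) ∼ (z̄, −y))`. -/
abbrev Mpt : Type := Quot MptRel

/-- The identification `y ∼ −y` on `ℝ²`. -/
def KRel : ℂ → ℂ → Prop := fun y u => u = -y

/-- `K = ℝ²/(y ∼ −y)`. -/
abbrev KCone : Type := Quot KRel

/-- The induced projection `p : M_pt → K`, `p[z, y] = [y]`. -/
def pMap : Mpt → KCone :=
  Quot.lift (fun zy => Quot.mk KRel zy.2)
    (by
      rintro ⟨z, y⟩ ⟨w, u⟩ ⟨h1, h2⟩
      have h2' : u = -y := h2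
      dsimp only
      rw [h2']
      exact Quot.sound (show KRel y (-y) from rfl))

/-- The vertex `o = [0] ∈ K`. -/
def oCone : KCone := Quot.mk KRel 0

/-- The topologically singular point `p₊ = [(1, 0)]`. -/
noncomputable def pPlus : Mpt := Quot.mk MptRel (1, 0)

/-- The topologically singular point `p₋ = [(−1, 0)]`. -/
noncomputable def pMinus : Mpt :=
  Quot.mk MptRel (⟨-1, by show (-1 : ℂ) ∈ Metric.sphere (0 : ℂ) 1; simp⟩, 0)

/-- The Klein bottle `K² = (S¹ × S¹)/((z, w) ∼ (z̄, −w))`. -/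
def KleinRel : Circle × Circle → Circle × Circle → Prop :=
  fun p q => (q.1 : ℂ) = (starRingEnd ℂ) (p.1 : ℂ) ∧ (q.2 : ℂ) = -(p.2 : ℂ)

abbrev Klein2 : Type := Quot KleinRel

/-- `g : E → Y` is a locally trivial fiber bundle. -/
def IsLocTrivBundle {E Y : Type*} [TopologicalSpace E] [TopologicalSpace Y]
    (g : E → Y) : Prop :=
  ∀ y : Y, ∃ N : Set Y, IsOpen N ∧ y ∈ N ∧
    ∃ h : ↥(g ⁻¹' N) ≃ₜ (↥(g ⁻¹' {y}) × ↥N), ∀ e : ↥(g ⁻¹' N), ((h e).2 : Y) = g e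

/-! ### Bundles trivial over a set -/

/-- `g` is trivial over `N` with fiber `F`: there is a homeomorphism `g⁻¹(N) ≅ F × N` over `N`. -/
def TrivOver {E Y : Type*} [TopologicalSpace E] [TopologicalSpace Y]
    (g : E → Y) (N : Set Y) (F : Type*) [TopologicalSpace F] : Prop :=
  ∃ Φ : ↥(g ⁻¹' N) ≃ₜ F × ↥N, ∀ e, ((Φ e).2 : Y) = g e

section Triv

variable {E Y F : Type*} [TopologicalSpace E] [TopologicalSpace Y] [TopologicalSpace F]

/-- A trivialization is built from a fiber coordinate `t` and a parametrization `s`, both defined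
everywhere but continuous and mutually inverse only over `N`. -/
lemma TrivOver.of_maps {g : E → Y} {N : Set Y} (hg : Continuous g) (t : E → F) (s : F → Y → E)
    (ht : ContinuousOn t (g ⁻¹' N))
    (hs : ContinuousOn (fun q : F × Y => s q.1 q.2) (univ ×ˢ N))
    (hgs : ∀ f, ∀ k ∈ N, g (s f k) = k) (hts : ∀ f, ∀ k ∈ N, t (s f k) = f)
    (hst : ∀ e, g e ∈ N → s (t e) (g e) = e) : TrivOver g N F := by
  refine ⟨{ toFun := fun e => (t e, ⟨g e, e.2⟩)
            invFun := fun q => ⟨s q.1 q.2, by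
              have := hgs q.1 q.2 q.2.2
              simp [this]⟩
            left_inv := fun e => Subtype.ext (hst e e.2)
            right_inv := fun q => Prod.ext (hts q.1 q.2 q.2.2) (Subtype.ext (hgs q.1 q.2 q.2.2))
            continuous_toFun := ?_
            continuous_invFun := ?_ }, fun e => rfl⟩
  · exact (continuousOn_iff_continuous_domRestrict.1 ht).prodMk
      ((hg.comp continuous_subtype_val).subtype_mk _)
  · refine Continuous.subtype_mk ?_ _
    exact hs.comp_continuous (f := fun q : F × ↥N => (q.1, (q.2 : Y))) (by fun_prop)
      (fun q => ⟨mem_univ _, q.2.2⟩)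

lemma TrivOver.fiber {g : E → Y} {N : Set Y} (h : TrivOver g N F) {y : Y} (hy : y ∈ N) :
    Nonempty (↥(g ⁻¹' {y}) ≃ₜ F) := by
  obtain ⟨Φ, hΦ⟩ := h
  have hmem : ∀ e : ↥(g ⁻¹' {y}), (e : E) ∈ g ⁻¹' N := fun e => by
    have : g e = y := e.2
    simpa [this] using hy
  have hinv : ∀ q, g (Φ.symm q) = q.2 := fun q => by rw [← hΦ, Φ.apply_symm_apply]
  refine ⟨{ toFun := fun e => (Φ ⟨e, hmem e⟩).1
            invFun := fun f => ⟨Φ.symm (f, ⟨y, hy⟩), hinv _⟩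
            left_inv := fun e => ?_
            right_inv := fun f => by simp
            continuous_toFun := ?_
            continuous_invFun := ?_ }⟩
  · apply Subtype.ext
    have h2 : ((Φ ⟨e, hmem e⟩).1, (⟨y, hy⟩ : ↥N)) = Φ ⟨e, hmem e⟩ :=
      Prod.ext rfl (Subtype.ext ((hΦ ⟨e, hmem e⟩).trans e.2).symm)
    change ((Φ.symm ((Φ ⟨e, hmem e⟩).1, (⟨y, hy⟩ : ↥N)) : ↥(g ⁻¹' N)) : E) = e
    rw [h2, Φ.symm_apply_apply]
  · exact continuous_fst.comp (Φ.continuous.comp (continuous_subtype_val.subtype_mk _))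
  · exact (continuous_subtype_val.comp (Φ.symm.continuous.comp (by fun_prop))).subtype_mk _

lemma TrivOver.restrict {g : E → Y} {N U : Set Y} (h : TrivOver g N F) (hNU : N ⊆ U) :
    TrivOver (fun z : ↥(g ⁻¹' U) => (⟨g z, z.2⟩ : ↥U)) (Subtype.val ⁻¹' N) F := by
  obtain ⟨Φ, hΦ⟩ := h
  have hinv : ∀ q, g (Φ.symm q) = q.2 := fun q => by rw [← hΦ, Φ.apply_symm_apply]
  refine ⟨{ toFun := fun e => ((Φ ⟨e.1.1, e.2⟩).1, ⟨⟨g e.1.1, e.1.2⟩, e.2⟩)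
            invFun := fun q => ⟨⟨Φ.symm (q.1, ⟨q.2.1.1, q.2.2⟩), hNU (Φ.symm _).2⟩, (Φ.symm _).2⟩
            left_inv := fun e => ?_
            right_inv := fun q => ?_
            continuous_toFun := ?_
            continuous_invFun := ?_ }, fun e => rfl⟩
  · apply Subtype.ext
    apply Subtype.ext
    have h2 : ((Φ ⟨e.1.1, e.2⟩).1, (⟨g e.1.1, e.2⟩ : ↥N)) = Φ ⟨e.1.1, e.2⟩ :=
      Prod.ext rfl (Subtype.ext (hΦ ⟨e.1.1, e.2⟩).symm)
    change ((Φ.symm ((Φ ⟨e.1.1, e.2⟩).1, (⟨g e.1.1, e.2⟩ : ↥N)) : ↥(g ⁻¹' N)) : E) = e.1.1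
    rw [h2, Φ.symm_apply_apply]
  · refine Prod.ext ?_ (Subtype.ext (Subtype.ext (hinv _)))
    simp
  · have h1 : Continuous fun e : ↥((fun z : ↥(g ⁻¹' U) => (⟨g z, z.2⟩ : ↥U)) ⁻¹'
        (Subtype.val ⁻¹' N)) => Φ ⟨e.1.1, e.2⟩ := Φ.continuous.comp (by fun_prop)
    have h2 : ∀ e : ↥((fun z : ↥(g ⁻¹' U) => (⟨g z, z.2⟩ : ↥U)) ⁻¹' (Subtype.val ⁻¹' N)),
        g e.1.1 = (Φ ⟨e.1.1, e.2⟩).2 := fun e => (hΦ ⟨e.1.1, e.2⟩).symm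
    refine (continuous_fst.comp h1).prodMk (Continuous.subtype_mk (Continuous.subtype_mk ?_ _) _)
    simp only [h2]
    exact continuous_subtype_val.comp (continuous_snd.comp h1)
  · refine Continuous.subtype_mk (Continuous.subtype_mk ?_ _) _
    exact continuous_subtype_val.comp (Φ.symm.continuous.comp (by fun_prop))

lemma isLocTrivBundle_of_trivOver {g : E → Y}
    (h : ∀ y, ∃ N : Set Y, IsOpen N ∧ y ∈ N ∧ TrivOver g N F) : IsLocTrivBundle g := by
  intro y
  obtain ⟨N, hN, hy, hT⟩ := h y
  obtain ⟨φ⟩ := hT.fiber hy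
  obtain ⟨Φ, hΦ⟩ := hT
  exact ⟨N, hN, hy, Φ.trans (φ.symm.prodCongr (Homeomorph.refl _)), hΦ⟩

end Triv

/-! ### The quotient spaces -/

lemma continuous_pMap : Continuous pMap :=
  continuous_quot_lift _ (continuous_quot_mk.comp continuous_snd)

lemma KCone.mk_neg (y : ℂ) : (Quot.mk KRel (-y) : KCone) = Quot.mk KRel y :=
  (Quot.sound (show KRel y (-y) from rfl)).symm

lemma Mpt.mk_inv_neg (z : Circle) (y : ℂ) :
    (Quot.mk MptRel (z⁻¹, -y) : Mpt) = Quot.mk MptRel (z, y) :=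
  (Quot.sound ⟨Circle.coe_inv_eq_conj z, rfl⟩).symm

lemma Klein2.mk_inv_neg (z w : Circle) :
    (Quot.mk KleinRel (z⁻¹, -w) : Klein2) = Quot.mk KleinRel (z, w) :=
  (Quot.sound ⟨Circle.coe_inv_eq_conj z, Circle.coe_neg w⟩).symm

lemma MptRel.eq {a b : Circle × ℂ} (h : MptRel a b) : b = (a.1⁻¹, -a.2) :=
  Prod.ext (Circle.ext (h.1.trans (Circle.coe_inv_eq_conj _).symm)) h.2

lemma KleinRel.eq {a b : Circle × Circle} (h : KleinRel a b) : b = (a.1⁻¹, -a.2) :=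
  Prod.ext (Circle.ext (h.1.trans (Circle.coe_inv_eq_conj _).symm))
    (Circle.ext (h.2.trans (Circle.coe_neg _).symm))

/-- The distance `‖y‖` of `[y]` from the vertex. -/
noncomputable def coneNorm : KCone → ℝ :=
  Quot.lift (fun y => ‖y‖) (by rintro y _ rfl; exact (norm_neg y).symm)

lemma continuous_coneNorm : Continuous coneNorm := continuous_quot_lift _ continuous_norm

lemma mk_eq_oCone_iff {y : ℂ} : Quot.mk KRel y = oCone ↔ y = 0 := by
  refine ⟨fun h => ?_, fun h => by rw [h]; rfl⟩
  have : ‖y‖ = ‖(0 : ℂ)‖ := congrArg coneNorm h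
  simpa using this

/-! ### Trivializations away from the vertex -/

/-- The real inner product `⟨y, c⟩` on `ℝ² = ℂ`. -/
noncomputable def dotC (c y : ℂ) : ℝ := (y * (starRingEnd ℂ) c).re

lemma dotC_neg (c y : ℂ) : dotC c (-y) = -dotC c y := by simp [dotC]

lemma continuous_dotC (c : ℂ) : Continuous (dotC c) := by unfold dotC; fun_prop

lemma dotC_self_pos {c : ℂ} (hc : c ≠ 0) : 0 < dotC c c := by
  rw [dotC, Complex.mul_conj, Complex.ofReal_re]
  exact Complex.normSq_pos.2 hc

/-- The set of classes `[y]` with `⟨y, c⟩ ≠ 0`. -/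
def coneNhd (c : ℂ) : Set KCone :=
  {k | Quot.lift (fun y => dotC c y ≠ 0) (by rintro y _ rfl; simp [dotC_neg]) k}

lemma mk_mem_coneNhd {c y : ℂ} : Quot.mk KRel y ∈ coneNhd c ↔ dotC c y ≠ 0 := Iff.rfl

lemma isOpen_coneNhd (c : ℂ) : IsOpen (coneNhd c) :=
  isQuotientMap_quot_mk.isOpen_preimage.1
    (isOpen_ne.preimage (continuous_dotC c) : IsOpen {y | dotC c y ≠ 0})

/-- A function equal to `f` where `ρ > 0` and to `g` where `ρ < 0` is continuous where `ρ ≠ 0`. -/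
lemma continuousOn_ite_sign {X Z : Type*} [TopologicalSpace X] [TopologicalSpace Z] {ρ : X → ℝ}
    (hρ : Continuous ρ) {f g : X → Z} (hf : Continuous f) (hg : Continuous g) (d : Z) :
    ContinuousOn (fun x => if 0 < ρ x then f x else if ρ x < 0 then g x else d)
      {x | ρ x ≠ 0} := by
  intro x hx
  apply ContinuousAt.continuousWithinAt
  rcases lt_or_gt_of_ne (show ρ x ≠ 0 from hx) with h | h
  · refine hg.continuousAt.congr ?_
    filter_upwards [(isOpen_Iio.preimage hρ).mem_nhds h] with u hu
    have hu' : ρ u < 0 := hu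
    rw [if_neg hu'.not_gt, if_pos hu']
  · refine hf.continuousAt.congr ?_
    filter_upwards [(isOpen_Ioi.preimage hρ).mem_nhds h] with u hu
    have hu' : 0 < ρ u := hu
    rw [if_pos hu']

/-- The representative `y` of a class with `⟨y, c⟩ > 0`; the value is `0` if there is none. -/
noncomputable def posRep (c : ℂ) : KCone → ℂ :=
  Quot.lift (fun y => if 0 < dotC c y then y else if dotC c y < 0 then -y else 0) (by
    rintro y _ rfl
    rcases lt_trichotomy (dotC c y) 0 with h | h | h
    · simp [dotC_neg, h, h.not_gt]
    · simp [dotC_neg, h]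
    · simp [dotC_neg, h, h.not_gt])

/-- The circle coordinate of the representative `(z, y)` with `⟨y, c⟩ > 0`; the value is `1` if
there is none. -/
noncomputable def circCoord (c : ℂ) : Mpt → Circle :=
  Quot.lift (fun q => if 0 < dotC c q.2 then q.1 else if dotC c q.2 < 0 then q.1⁻¹ else 1) (by
    rintro ⟨z, y⟩ b hb
    rw [hb.eq]
    rcases lt_trichotomy (dotC c y) 0 with h | h | h
    · simp [dotC_neg, h, h.not_gt]
    · simp [dotC_neg, h]
    · simp [dotC_neg, h, h.not_gt])

lemma circCoord_of_pos {c y : ℂ} (z : Circle) (h : 0 < dotC c y) :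
    circCoord c (Quot.mk MptRel (z, y)) = z := if_pos h

lemma posRep_of_pos {c y : ℂ} (h : 0 < dotC c y) : posRep c (Quot.mk KRel y) = y := if_pos h

lemma continuousOn_posRep (c : ℂ) : ContinuousOn (posRep c) (coneNhd c) :=
  (isQuotientMap_quot_mk.continuousOn_isOpen_iff (isOpen_coneNhd c)).2
    (continuousOn_ite_sign (continuous_dotC c) continuous_id continuous_neg 0)

lemma continuousOn_circCoord (c : ℂ) : ContinuousOn (circCoord c) (pMap ⁻¹' coneNhd c) :=
  (isQuotientMap_quot_mk.continuousOn_isOpen_iff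
      ((isOpen_coneNhd c).preimage continuous_pMap)).2
    (continuousOn_ite_sign (ρ := fun q : Circle × ℂ => dotC c q.2)
      ((continuous_dotC c).comp continuous_snd) continuous_fst continuous_fst.inv 1)

lemma exists_pos_rep {c : ℂ} {k : KCone} (hk : k ∈ coneNhd c) :
    ∃ y, 0 < dotC c y ∧ Quot.mk KRel y = k := by
  induction k using Quot.ind with | mk y
  rcases lt_or_gt_of_ne (mk_mem_coneNhd.1 hk) with h | h
  · exact ⟨-y, by rw [dotC_neg]; linarith, KCone.mk_neg y⟩
  · exact ⟨y, h, rfl⟩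

lemma exists_pos_rep_Mpt {c : ℂ} {e : Mpt} (he : pMap e ∈ coneNhd c) :
    ∃ z y, 0 < dotC c y ∧ Quot.mk MptRel (z, y) = e := by
  induction e using Quot.ind with | mk q
  obtain ⟨z, y⟩ := q
  rcases lt_or_gt_of_ne (mk_mem_coneNhd.1 he) with h | h
  · exact ⟨z⁻¹, -y, by rw [dotC_neg]; linarith, Mpt.mk_inv_neg z y⟩
  · exact ⟨z, y, h, rfl⟩

lemma trivOver_pMap (c : ℂ) : TrivOver pMap (coneNhd c) Circle := by
  refine TrivOver.of_maps continuous_pMap (circCoord c)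
    (fun z k => Quot.mk MptRel (z, posRep c k)) (continuousOn_circCoord c) ?_ ?_ ?_ ?_
  · refine continuous_quot_mk.comp_continuousOn (continuousOn_fst.prodMk ?_)
    exact (continuousOn_posRep c).comp continuousOn_snd (fun q hq => hq.2)
  · intro z k hk
    obtain ⟨y, hy, rfl⟩ := exists_pos_rep hk
    rw [posRep_of_pos hy]
    rfl
  · intro z k hk
    obtain ⟨y, hy, rfl⟩ := exists_pos_rep hk
    rw [posRep_of_pos hy, circCoord_of_pos z hy]
  · intro e he
    obtain ⟨z, y, hy, rfl⟩ := exists_pos_rep_Mpt he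
    change Quot.mk MptRel (_, posRep c (Quot.mk KRel y)) = _
    rw [posRep_of_pos hy, circCoord_of_pos z hy]

lemma exists_coneNhd {k : KCone} (hk : k ≠ oCone) : ∃ c, k ∈ coneNhd c := by
  induction k using Quot.ind with | mk y
  exact ⟨y, (dotC_self_pos fun h => hk (mk_eq_oCone_iff.2 h)).ne'⟩

lemma coneNhd_subset (c : ℂ) : coneNhd c ⊆ {oCone}ᶜ := by
  rintro _ hk rfl
  exact mk_mem_coneNhd.1 hk (by simp [dotC])

/-! ### The fiber over the vertex -/

/-- The function `[z, y] ↦ (1 - Re z) / 2`. -/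
noncomputable def heightFun : Mpt → ℝ :=
  Quot.lift (fun q => (1 - (q.1 : ℂ).re) / 2) (by
    rintro a b hb
    have h : (b.1 : ℂ).re = (a.1 : ℂ).re := by rw [hb.1, Complex.conj_re]
    exact congrArg (fun x : ℝ => (1 - x) / 2) h.symm)

lemma continuous_heightFun : Continuous heightFun :=
  continuous_quot_lift _ (by fun_prop)

lemma Circle.re_mem_Icc (z : Circle) : (z : ℂ).re ∈ Icc (-1 : ℝ) 1 :=
  abs_le.1 ((Complex.abs_re_le_norm (z : ℂ)).trans_eq (Circle.norm_coe z))

lemma heightFun_mem (e : Mpt) : heightFun e ∈ Icc (0 : ℝ) 1 := by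
  induction e using Quot.ind with | mk q
  have h := Circle.re_mem_Icc q.1
  change (1 - (q.1 : ℂ).re) / 2 ∈ _
  constructor <;> linarith [h.1, h.2]

/-- Points of the circle with the same real part are equal or conjugate. -/
lemma Circle.eq_or_eq_inv_of_re_eq {z w : Circle} (h : (z : ℂ).re = (w : ℂ).re) :
    z = w ∨ z = w⁻¹ := by
  have hz := Circle.normSq_coe z
  have hw := Circle.normSq_coe w
  rw [Complex.normSq_apply] at hz hw
  have him : ((z : ℂ).im - (w : ℂ).im) * ((z : ℂ).im + (w : ℂ).im) = 0 := by
    rw [h] at hz; linarith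
  rcases mul_eq_zero.1 him with h' | h'
  · exact Or.inl (Circle.ext (Complex.ext h (by linarith)))
  · refine Or.inr (Circle.ext ?_)
    rw [Circle.coe_inv_eq_conj]
    exact Complex.ext (by simpa using h) (by rw [Complex.conj_im]; linarith)

lemma Circle.mk_zero_eq_of_re_eq {z w : Circle} (h : (z : ℂ).re = (w : ℂ).re) :
    (Quot.mk MptRel (z, 0) : Mpt) = Quot.mk MptRel (w, 0) := by
  rcases Circle.eq_or_eq_inv_of_re_eq h with rfl | rfl
  · rfl
  · simpa using Mpt.mk_inv_neg w 0

lemma Circle.re_exp_arccos {x : ℝ} (h1 : -1 ≤ x) (h2 : x ≤ 1) :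
    (Circle.exp (Real.arccos x) : ℂ).re = x := by
  rw [Circle.coe_exp, Complex.exp_ofReal_mul_I_re, Real.cos_arccos h1 h2]

/-- The fiber over the vertex is `S¹` modulo conjugation, parametrized by the real part. -/
noncomputable def vertexFiber : ↥(pMap ⁻¹' {oCone}) ≃ₜ ↥(Set.Icc (0 : ℝ) 1) where
  toFun e := ⟨heightFun e, heightFun_mem e⟩
  invFun x := ⟨Quot.mk MptRel (Circle.exp (Real.arccos (1 - 2 * x)), 0), rfl⟩
  left_inv := by
    rintro ⟨e, he⟩
    induction e using Quot.ind with | mk q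
    obtain ⟨z, y⟩ := q
    obtain rfl : y = 0 := mk_eq_oCone_iff.1 he
    have h := Circle.re_mem_Icc z
    refine Subtype.ext (Circle.mk_zero_eq_of_re_eq ?_)
    change (Circle.exp (Real.arccos (1 - 2 * ((1 - (z : ℂ).re) / 2))) : ℂ).re = _
    rw [Circle.re_exp_arccos] <;> linarith [h.1, h.2]
  right_inv := by
    rintro ⟨x, h0, h1⟩
    apply Subtype.ext
    change (1 - (Circle.exp (Real.arccos (1 - 2 * x)) : ℂ).re) / 2 = x
    rw [Circle.re_exp_arccos] <;> linarith
  continuous_toFun := (continuous_heightFun.comp continuous_subtype_val).subtype_mk _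
  continuous_invFun := by
    refine Continuous.subtype_mk (continuous_quot_mk.comp ?_) _
    have := Real.continuous_arccos
    fun_prop

/-! ### The preimage of a metric circle -/

/-- The direction `y / ‖y‖` of a nonzero `y`. -/
noncomputable def dirC (y : ℂ) (hy : y ≠ 0) : Circle :=
  ⟨y / ‖y‖, by
    change y / (‖y‖ : ℂ) ∈ Metric.sphere (0 : ℂ) 1
    simp [hy]⟩

lemma coe_dirC (y : ℂ) (hy : y ≠ 0) : (dirC y hy : ℂ) = y / ‖y‖ := rfl

open Classical in
/-- The map `[z, y] ↦ [z, y / ‖y‖]` to the Klein bottle, extended by a constant over `y = 0`. -/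
noncomputable def toKlein : Mpt → Klein2 :=
  Quot.lift (fun q => if h : q.2 = 0 then Quot.mk KleinRel (1, 1)
      else Quot.mk KleinRel (q.1, dirC q.2 h)) (by
    rintro ⟨z, y⟩ b hb
    rw [hb.eq]
    by_cases h : y = 0
    · simp [h]
    · have hd : dirC (-y) (neg_ne_zero.2 h) = -dirC y h :=
        Circle.ext (by simp [coe_dirC, neg_div])
      simp only [neg_eq_zero, h, dite_false]
      rw [hd, Klein2.mk_inv_neg])

lemma toKlein_mk (z : Circle) {y : ℂ} (hy : y ≠ 0) :
    toKlein (Quot.mk MptRel (z, y)) = Quot.mk KleinRel (z, dirC y hy) := dif_neg hy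

lemma continuousOn_toKlein : ContinuousOn toKlein {e | coneNorm (pMap e) ≠ 0} := by
  refine (isQuotientMap_quot_mk.continuousOn_isOpen_iff
    (isOpen_ne.preimage (continuous_coneNorm.comp continuous_pMap))).2 ?_
  rw [continuousOn_iff_continuous_domRestrict]
  have hne : ∀ q : ↥(Quot.mk MptRel ⁻¹' {e | coneNorm (pMap e) ≠ 0}), q.1.2 ≠ 0 :=
    fun q => norm_ne_zero_iff.1 q.2
  have heq : (Quot.mk MptRel ⁻¹' {e | coneNorm (pMap e) ≠ 0}).domRestrict (toKlein ∘ Quot.mk MptRel)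
      = fun q => Quot.mk KleinRel (q.1.1, dirC q.1.2 (hne q)) :=
    funext fun q => toKlein_mk q.1.1 (hne q)
  change Continuous ((Quot.mk MptRel ⁻¹' {e | coneNorm (pMap e) ≠ 0}).domRestrict
    (toKlein ∘ Quot.mk MptRel))
  rw [heq]
  refine continuous_quot_mk.comp ((by fun_prop : Continuous _).prodMk ?_)
  refine Continuous.subtype_mk ?_ _
  refine Continuous.div (by fun_prop) (by fun_prop) fun q => ?_
  simpa using hne q

/-- The map `[z, w] ↦ [z, r w]` from the Klein bottle. -/
noncomputable def ofKlein (r : ℝ) : Klein2 → Mpt :=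
  Quot.lift (fun q => Quot.mk MptRel (q.1, r * (q.2 : ℂ))) (by
    rintro ⟨z, w⟩ b hb
    rw [hb.eq]
    simp only [Circle.coe_neg, mul_neg]
    rw [Mpt.mk_inv_neg])

lemma continuous_ofKlein (r : ℝ) : Continuous (ofKlein r) :=
  continuous_quot_lift _ (continuous_quot_mk.comp (by fun_prop))

lemma coneNorm_eq_of_mem {r : ℝ} {e : Mpt}
    (he : e ∈ pMap ⁻¹' {k : KCone | ∃ y : ℂ, ‖y‖ = r ∧ k = Quot.mk KRel y}) :
    coneNorm (pMap e) = r := by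
  obtain ⟨y, hy, h⟩ := he
  rw [h]
  exact hy

/-- The preimage of the circle of radius `r > 0` is the Klein bottle. -/
noncomputable def circlePreimage (r : ℝ) (hr : 0 < r) :
    ↥(pMap ⁻¹' {k : KCone | ∃ y : ℂ, ‖y‖ = r ∧ k = Quot.mk KRel y}) ≃ₜ Klein2 where
  toFun e := toKlein e
  invFun q := ⟨ofKlein r q, by
    induction q using Quot.ind with | mk q
    exact ⟨r * (q.2 : ℂ), by simp [abs_of_pos hr, Circle.norm_coe], rfl⟩⟩
  left_inv := by
    rintro ⟨e, he⟩
    have hn := coneNorm_eq_of_mem he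
    induction e using Quot.ind with | mk q
    obtain ⟨z, y⟩ := q
    have hn' : ‖y‖ = r := hn
    have hy : y ≠ 0 := norm_pos_iff.1 (hn' ▸ hr)
    apply Subtype.ext
    change ofKlein r (toKlein (Quot.mk MptRel (z, y))) = _
    rw [toKlein_mk z hy]
    change Quot.mk MptRel (z, r * (dirC y hy : ℂ)) = _
    rw [coe_dirC, hn', mul_div_cancel₀ _ (Complex.ofReal_ne_zero.2 hr.ne')]
  right_inv := by
    intro q
    induction q using Quot.ind with | mk q
    obtain ⟨z, w⟩ := q
    have h0 : (r : ℂ) * (w : ℂ) ≠ 0 := by simp [hr.ne']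
    change toKlein (Quot.mk MptRel (z, r * (w : ℂ))) = _
    rw [toKlein_mk z h0]
    congr 2
    refine Circle.ext ?_
    have : (r : ℂ) ≠ 0 := Complex.ofReal_ne_zero.2 hr.ne'
    rw [coe_dirC, norm_mul, Circle.norm_coe, Complex.norm_of_nonneg hr.le, mul_one,
      mul_div_cancel_left₀ _ this]
  continuous_toFun := continuousOn_toKlein.comp_continuous continuous_subtype_val fun e => by
    change coneNorm (pMap e) ≠ 0
    rw [coneNorm_eq_of_mem e.2]
    exact hr.ne'
  continuous_invFun := (continuous_ofKlein r).subtype_mk _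

/-- For the projection `p : M_pt → K`:
(a) away from the vertex `o`, `p` is a locally trivial fiber bundle with all fibers
homeomorphic to `S¹`;
(b) the fiber `p⁻¹(o)` is homeomorphic to `[0, 1]` with endpoints `p₊` and `p₋`;
(c) for every `r > 0` the preimage of the metric circle `{[y] : ‖y‖ = r}` is
homeomorphic to the Klein bottle `K²`. -/
theorem statement16 :
    (IsLocTrivBundle
        (fun z : ↥(pMap ⁻¹' ({oCone}ᶜ)) => (⟨pMap z, z.2⟩ : ↥({oCone}ᶜ : Set KCone))) ∧
      ∀ k : KCone, k ≠ oCone → Nonempty (↥(pMap ⁻¹' {k}) ≃ₜ Circle)) ∧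
    (∃ h : ↥(pMap ⁻¹' {oCone}) ≃ₜ ↥(Set.Icc (0 : ℝ) 1),
      (h ⟨pPlus, rfl⟩ : ℝ) = 0 ∧ (h ⟨pMinus, rfl⟩ : ℝ) = 1) ∧
    (∀ r : ℝ, 0 < r →
      Nonempty
        (↥(pMap ⁻¹' {k : KCone | ∃ y : ℂ, ‖y‖ = r ∧ k = Quot.mk KRel y}) ≃ₜ Klein2)) := by
  refine ⟨⟨?_, fun k hk => ?_⟩, ⟨vertexFiber, ?_, ?_⟩, fun r hr => ⟨circlePreimage r hr⟩⟩
  · refine isLocTrivBundle_of_trivOver (F := Circle) fun k => ?_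
    obtain ⟨c, hc⟩ := exists_coneNhd k.2
    exact ⟨Subtype.val ⁻¹' coneNhd c, (isOpen_coneNhd c).preimage continuous_subtype_val, hc,
      (trivOver_pMap c).restrict (coneNhd_subset c)⟩
  · obtain ⟨c, hc⟩ := exists_coneNhd hk
    exact (trivOver_pMap c).fiber hc
  · change (1 - (1 : ℂ).re) / 2 = 0
    simp
  · change (1 - (-1 : ℂ).re) / 2 = 1
    norm_num
end

section
/- Let M_pt := (S¹ × ℝ²)/((z, y) ∼ (z̄, −y)) with the quotient topology. Then the two points p₊ = [(1, 0)] and p₋ = [(−1, 0)] admit no open neighborhood homeomorphic to ℝ³, while every other point of M_pt admits an open neighborhood homeomorphic to ℝ³. In other words, M_pt is a topological 3-manifold away from exactly the two topologically singular points p₊ and p₋. -/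
/-!
Write `α(z, y) = (z̄, -y)`. Off its two fixed points `(±1, 0)` the involution `α` acts freely, so
`S¹ × ℝ² → M_pt` is a two-sheeted covering away from `p₊` and `p₋` (`isCoveringMapOn_mk`). A covering
is a local homeomorphism, so the charts of the 3-manifold `S¹ × ℝ²` descend to every other point.

Suppose that `p = p₊` or `p = p₋`, the class of `(z, 0)` with `z = ±1`, had a neighbourhood
homeomorphic to `ℝ³`. After shrinking, `p` corresponds to the origin and the neighbourhood contains
no other singular point. Since `ℝ³ ∖ {0}` is simply connected, the double cover has a continuous
section over the punctured neighbourhood (`exists_lift_of_punctured`). For small `ε` the circle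
`{(z, ε w) : |w| = 1}` maps into this punctured neighbourhood, and on it the section picks
`± ε w` for the class of `(z, ε w)`. As `(z, ε w)` and `(z, -ε w)` have the same class, the sign is
an odd function of `w`; but it is also a continuous function from the connected circle to `{1, -1}`,
hence constant, which is absurd (`not_isManifoldPt_of_inv_eq_self`).

The lifting over `ℝ³ ∖ {0}` is obtained by gluing lifts over the complements of two opposite closed
half-axes. These are star-shaped, so lifts exist there, and their intersection, the complement of a
line, is connected, so two lifts that agree at one point of it agree on all of it.
-/

open Metric Filter Topology Set

/-- `x` is a manifold point of dimension `n`: it has an open neighborhood homeomorphic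
to `ℝⁿ`. -/
def IsManifoldPt (n : ℕ) {M : Type*} [TopologicalSpace M] (x : M) : Prop :=
  ∃ U : Set M, IsOpen U ∧ x ∈ U ∧ Nonempty (U ≃ₜ (Fin n → ℝ))

/-! ### The involution and the double cover -/

/-- The involution `α(z, y) = (z̄, -y)`, conjugation on the circle being inversion. -/
noncomputable def conjNeg (p : Circle × ℂ) : Circle × ℂ := (p.1⁻¹, -p.2)

lemma continuous_conjNeg : Continuous conjNeg := by
  unfold conjNeg; fun_prop

@[simp] lemma conjNeg_conjNeg (p : Circle × ℂ) : conjNeg (conjNeg p) = p := by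
  simp [conjNeg]

lemma mptRel_iff {p q : Circle × ℂ} : MptRel p q ↔ q = conjNeg p := by
  rw [MptRel, conjNeg, Prod.ext_iff, Circle.ext_iff, Circle.coe_inv_eq_conj]

lemma mk_conjNeg (p : Circle × ℂ) : Quot.mk MptRel (conjNeg p) = Quot.mk MptRel p :=
  (Quot.sound (mptRel_iff.2 rfl)).symm

lemma mk_eq_mk_iff {p q : Circle × ℂ} :
    Quot.mk MptRel p = Quot.mk MptRel q ↔ p = q ∨ p = conjNeg q := by
  constructor
  · intro h
    have h' : Relation.EqvGen MptRel p q := Quot.eqvGen_exact h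
    clear h
    induction h' with
    | rel x y h => right; rw [mptRel_iff.1 h, conjNeg_conjNeg]
    | refl x => exact Or.inl rfl
    | symm x y h ih =>
      rcases ih with rfl | rfl
      · exact Or.inl rfl
      · right; simp
    | trans x y z h h' ih ih' =>
      rcases ih with rfl | rfl <;> rcases ih' with rfl | rfl <;> simp
  · rintro (rfl | rfl)
    · rfl
    · exact mk_conjNeg q

lemma conjNeg_eq_self_iff {p : Circle × ℂ} : conjNeg p = p ↔ p.1⁻¹ = p.1 ∧ p.2 = 0 := by
  simp [conjNeg, Prod.ext_iff, neg_eq_self]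

lemma circle_inv_eq_self_iff {z : Circle} : z⁻¹ = z ↔ z = 1 ∨ (z : ℂ) = -1 := by
  rw [inv_eq_iff_mul_eq_one, Circle.ext_iff, Circle.ext_iff, Circle.coe_mul, Circle.coe_one,
    mul_self_eq_one_iff]

/-- The images in `M_pt` of the fixed points of the involution. -/
def singSet : Set Mpt := Quot.mk MptRel '' {p | conjNeg p = p}

/-- The preimage of `singSet` is no larger than the fixed-point set. -/
lemma mk_mem_singSet_iff {p : Circle × ℂ} : Quot.mk MptRel p ∈ singSet ↔ conjNeg p = p := by
  constructor
  · rintro ⟨q, hq, h⟩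
    rcases mk_eq_mk_iff.1 h with rfl | rfl
    · exact hq
    · simpa [eq_comm] using hq
  · exact fun h => ⟨p, h, rfl⟩

/-- Away from the fixed points, `S¹ × ℝ² → M_pt` is the quotient by a free action of the group of
order two, hence a covering. -/
lemma isCoveringMapOn_mk : IsCoveringMapOn (Quot.mk MptRel) singSetᶜ := by
  -- The group `{1, -1}` acts by `±(z, y) = (z^{±1}, ±y)`.
  let act : MulAction ℤˣ (Circle × ℂ) :=
    { smul := fun u p => if u = 1 then p else conjNeg p
      one_smul := fun p => if_pos rfl
      mul_smul := fun u v p => by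
        change (if _ then _ else _) = (if _ then (if _ then _ else _) else conjNeg (if _ then _ else _))
        rcases Int.units_eq_one_or u with rfl | rfl <;>
        rcases Int.units_eq_one_or v with rfl | rfl <;> simp }
  have h1 (p : Circle × ℂ) : act.toSMul.smul 1 p = p := one_smul ℤˣ p
  have hm (p : Circle × ℂ) : act.toSMul.smul (-1) p = conjNeg p := if_neg (by decide)
  have : ContinuousConstSMul ℤˣ (Circle × ℂ) := ⟨fun u => by
    rcases Int.units_eq_one_or u with rfl | rfl
    · exact continuous_id.congr fun p => (h1 p).symm
    · exact continuous_conjNeg.congr fun p => (hm p).symm⟩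
  refine (isQuotientMap_quot_mk.isCoveringMapOn_of_properlyDiscontinuousSMul (G := ℤˣ) ?_).mono ?_
  · intro p q
    rw [mk_eq_mk_iff]
    constructor
    · rintro (rfl | rfl)
      exacts [⟨1, h1 _⟩, ⟨-1, hm _⟩]
    · rintro ⟨u, rfl⟩
      rcases Int.units_eq_one_or u with rfl | rfl
      exacts [Or.inl (h1 _), Or.inr (hm _)]
  · intro x hx
    induction x using Quot.ind with | mk p =>
    refine ⟨p, ?_, rfl⟩
    rw [mem_ofPred_eq, Subgroup.eq_bot_iff_forall]
    intro u hu
    rcases Int.units_eq_one_or u with rfl | rfl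
    · rfl
    · exact absurd (mk_mem_singSet_iff.2 ((hm p).symm.trans hu)) hx

/-- The point `-1` of the circle, in the form used by `pMinus`. -/
noncomputable def circleNegOne : Circle :=
  ⟨-1, by show (-1 : ℂ) ∈ Metric.sphere (0 : ℂ) 1; simp⟩

lemma finite_setOf_conjNeg_eq_self : {p | conjNeg p = p}.Finite := by
  refine (toFinite {((1 : Circle), (0 : ℂ)), (circleNegOne, (0 : ℂ))}).subset fun p hp => ?_
  obtain ⟨hz, hy⟩ := conjNeg_eq_self_iff.1 hp
  rcases circle_inv_eq_self_iff.1 hz with hz | hz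
  · left; exact Prod.ext hz hy
  · right; exact Prod.ext (Circle.ext hz) hy

lemma singSet_eq : singSet = {pPlus, pMinus} := by
  ext x
  induction x using Quot.ind with | mk p =>
  have h1 : ((1 : Circle), (0 : ℂ)) ∈ {p | conjNeg p = p} := by simp [conjNeg]
  have h2 : (circleNegOne, (0 : ℂ)) ∈ {p | conjNeg p = p} := by
    rw [mem_ofPred_eq, conjNeg_eq_self_iff, circle_inv_eq_self_iff]
    exact ⟨Or.inr rfl, rfl⟩
  constructor
  · intro h
    obtain ⟨hz, hy⟩ := conjNeg_eq_self_iff.1 (mk_mem_singSet_iff.1 h)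
    rcases circle_inv_eq_self_iff.1 hz with hz | hz
    · left; exact congrArg _ (Prod.ext hz hy)
    · right; exact congrArg _ (Prod.ext (Circle.ext hz) hy)
  · rintro (h | h)
    exacts [h ▸ ⟨_, h1, rfl⟩, h ▸ ⟨_, h2, rfl⟩]

/-! ### Manifold points and charts -/

/-- A point in the source of a chart with values in `ℝⁿ` has arbitrarily small neighbourhoods
parametrized by all of `ℝⁿ`, with the point at the origin: rescale a small ball. -/
lemma exists_parametrization {n : ℕ} {M : Type*} [TopologicalSpace M] {x : M}
    (χ : OpenPartialHomeomorph M (Fin n → ℝ)) (hx : x ∈ χ.source) {N : Set M} (hN : N ∈ 𝓝 x) :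
    ∃ κ : OpenPartialHomeomorph (Fin n → ℝ) M, κ.source = univ ∧ κ 0 = x ∧ κ.target ⊆ N := by
  have hnhds : χ.target ∩ χ.symm ⁻¹' N ∈ 𝓝 (χ x) := by
    refine inter_mem (χ.open_target.mem_nhds (χ.map_source hx)) ?_
    refine (χ.continuousAt_symm (χ.map_source hx)).preimage_mem_nhds ?_
    rwa [χ.left_inv hx]
  obtain ⟨r, hr, hball⟩ := Metric.mem_nhds_iff.1 hnhds
  have htgt : (OpenPartialHomeomorph.univBall (χ x) r).target ⊆ χ.target := by
    rw [OpenPartialHomeomorph.univBall_target _ hr]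
    exact fun v hv => (hball hv).1
  refine ⟨(OpenPartialHomeomorph.univBall (χ x) r).trans χ.symm, ?_, ?_, ?_⟩
  · rw [OpenPartialHomeomorph.trans_source, OpenPartialHomeomorph.univBall_source, univ_inter,
      eq_univ_iff_forall]
    intro v
    exact htgt ((OpenPartialHomeomorph.univBall (χ x) r).map_source (by simp))
  · simp [χ.left_inv hx]
  · intro y hy
    rw [OpenPartialHomeomorph.trans_target, OpenPartialHomeomorph.univBall_target _ hr] at hy
    have h1 : y ∈ χ.source := hy.1
    have h2 := (hball hy.2).2
    rwa [mem_preimage, OpenPartialHomeomorph.symm_symm, χ.left_inv h1] at h2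

/-- Being a manifold point only requires a local chart onto an open subset of `ℝⁿ`. -/
lemma isManifoldPt_iff {n : ℕ} {M : Type*} [TopologicalSpace M] {x : M} :
    IsManifoldPt n x ↔ ∃ χ : OpenPartialHomeomorph M (Fin n → ℝ), x ∈ χ.source := by
  constructor
  · rintro ⟨U, hU, hx, ⟨h⟩⟩
    have : Nonempty U := ⟨⟨x, hx⟩⟩
    refine ⟨(hU.isOpenEmbedding_subtypeVal.toOpenPartialHomeomorph).symm.trans
      h.toOpenPartialHomeomorph, ?_⟩
    simpa using hx
  · rintro ⟨χ, hx⟩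
    obtain ⟨κ, hs, h0, -⟩ := exists_parametrization χ hx univ_mem
    refine ⟨κ.target, κ.open_target, h0 ▸ κ.map_source (hs ▸ mem_univ _), ⟨?_⟩⟩
    exact κ.toHomeomorphSourceTarget.symm.trans
      ((Homeomorph.setCongr hs).trans (Homeomorph.Set.univ _))

lemma exists_chart (p : Circle × ℂ) :
    ∃ χ : OpenPartialHomeomorph (Circle × ℂ) (Fin 3 → ℝ), p ∈ χ.source := by
  let L : (EuclideanSpace ℝ (Fin 1) × ℂ) ≃L[ℝ] (Fin 3 → ℝ) :=
    ContinuousLinearEquiv.ofFinrankEq (by simp [Complex.finrank_real_complex])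
  refine ⟨((chartAt (EuclideanSpace ℝ (Fin 1)) p.1).prod (OpenPartialHomeomorph.refl ℂ)).trans
    L.toHomeomorph.toOpenPartialHomeomorph, ?_⟩
  simp

/-- Away from the fixed points the covering `S¹ × ℝ² → M_pt` carries the charts of the total space
down to `M_pt`. -/
lemma isManifoldPt_of_notMem_singSet {x : Mpt} (hx : x ∉ singSet) : IsManifoldPt 3 x := by
  induction x using Quot.ind with | mk p =>
  obtain ⟨χ, hχ⟩ := exists_chart p
  obtain ⟨φ, hφ, hφ'⟩ := isCoveringMapOn_mk.isLocalHomeomorphOn p hx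
  refine isManifoldPt_iff.2 ⟨φ.symm.trans χ, ?_⟩
  rw [hφ', OpenPartialHomeomorph.trans_source]
  refine ⟨φ.map_source hφ, ?_⟩
  rwa [mem_preimage, φ.left_inv hφ]

/-! ### Lifting over the punctured space -/

/-- The complement in `ℝ³` of the closed half-axis `{(0, 0, t) : c * t ≤ 0}`. -/
def slitSpace (c : ℝ) : Set (Fin 3 → ℝ) := {v | ¬ (v 0 = 0 ∧ v 1 = 0 ∧ c * v 2 ≤ 0)}

lemma isOpen_slitSpace (c : ℝ) : IsOpen (slitSpace c) := by
  have : IsClosed {v : Fin 3 → ℝ | v 0 = 0 ∧ v 1 = 0 ∧ c * v 2 ≤ 0} :=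
    (isClosed_eq (continuous_apply 0) continuous_const).inter
      ((isClosed_eq (continuous_apply 1) continuous_const).inter
        (isClosed_le (continuous_const.mul (continuous_apply 2)) continuous_const))
  exact this.isOpen_compl

lemma isSimplyConnected_slitSpace {c : ℝ} (hc : c ≠ 0) : IsSimplyConnected (slitSpace c) := by
  have hc2 : 0 < c * c := mul_self_pos.2 hc
  -- The set is star-shaped around the point `(0, 0, c)` of the opposite half-axis.
  have hmem : ![0, 0, c] ∈ slitSpace c := by
    rintro ⟨-, -, h⟩
    exact absurd h (not_le.2 (by simpa using hc2))
  have hstar : StarConvex ℝ ![0, 0, c] (slitSpace c) := by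
    rintro y hy a b ha hb hab ⟨h0, h1, h2⟩
    simp only [Pi.add_apply, Pi.smul_apply, smul_eq_mul, Matrix.cons_val_zero, Matrix.cons_val_one,
      Matrix.cons_val, mul_zero, zero_add, mul_eq_zero] at h0 h1 h2
    rcases hb.eq_or_lt with rfl | hb
    · have : a = 1 := by linarith
      subst this
      nlinarith
    · refine hy ⟨h0.resolve_left hb.ne', h1.resolve_left hb.ne', ?_⟩
      by_contra! hlt
      nlinarith [mul_nonneg ha hc2.le, mul_pos hb hlt]
  have := hstar.contractibleSpace ⟨_, hmem⟩
  exact (inferInstance : SimplyConnectedSpace (slitSpace c))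

/-- `ℝ³` minus a line is connected, the line having codimension two. -/
lemma isConnected_compl_axis : IsConnected {v : Fin 3 → ℝ | ¬ (v 0 = 0 ∧ v 1 = 0)} := by
  let f : (Fin 3 → ℝ) →ₗ[ℝ] ℝ × ℝ := (LinearMap.proj 0).prod (LinearMap.proj 1)
  have hf : Function.Surjective f := fun y => ⟨![y.1, y.2, 0], by simp [f]⟩
  have hrank : 1 < Module.rank ℝ ((Fin 3 → ℝ) ⧸ LinearMap.ker f) := by
    rw [(f.quotKerEquivOfSurjective hf).rank_eq]
    simp [one_add_one_eq_two]
  convert isConnected_compl_of_one_lt_codim hrank using 1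
  ext v
  simp [f]

/-- The covering-space form of the simple connectedness of `ℝ³ ∖ {0}`: every map from it to the
base of a covering lifts. It is the union of two star-shaped open sets, on which lifts exist, with
connected intersection, so that lifts agreeing at one point agree on the whole overlap. -/
lemma exists_lift_of_punctured {E X : Type*} [TopologicalSpace E] [TopologicalSpace X] {p : E → X}
    (hp : IsCoveringMap p) (hsurj : Function.Surjective p)
    (f : C({v : Fin 3 → ℝ // v ≠ 0}, X)) :
    ∃ F : C({v : Fin 3 → ℝ // v ≠ 0}, E), ∀ v, p (F v) = f v := by
  let sgn : Bool → ℝ := fun b => if b then 1 else -1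
  have hsgn (b : Bool) : sgn b ≠ 0 := by cases b <;> norm_num [sgn]
  let S : Bool → Set {v : Fin 3 → ℝ // v ≠ 0} := fun b => Subtype.val ⁻¹' slitSpace (sgn b)
  have hSopen (b : Bool) : IsOpen (S b) := (isOpen_slitSpace _).preimage continuous_subtype_val
  have hSsc (b : Bool) : SimplyConnectedSpace (S b) := by
    refine (Topology.IsEmbedding.subtypeVal.isSimplyConnected_image (s := S b)).1 ?_
    change IsSimplyConnected (Subtype.val '' (Subtype.val ⁻¹' slitSpace (sgn b)))
    rw [image_preimage_eq_iff.2]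
    · exact isSimplyConnected_slitSpace (hsgn b)
    · exact fun v hv => ⟨⟨v, by rintro rfl; exact hv ⟨rfl, rfl, by simp⟩⟩, rfl⟩
  have hlpc : LocallyPathConnectedSpace {v : Fin 3 → ℝ // v ≠ 0} :=
    (isOpen_ne (x := (0 : Fin 3 → ℝ))).locallyPathConnectedSpace
  have hSlpc (b : Bool) : LocallyPathConnectedSpace (S b) := (hSopen b).locallyPathConnectedSpace
  let D : Set {v : Fin 3 → ℝ // v ≠ 0} := {v | ¬ (v.1 0 = 0 ∧ v.1 1 = 0)}
  have hDS (b : Bool) : D ⊆ S b := fun v hv h => hv ⟨h.1, h.2.1⟩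
  have hSD {v} (h0 : v ∈ S true) (h1 : v ∈ S false) : v ∈ D := by
    rintro ⟨h, h'⟩
    rcases le_total (v.1 2) 0 with h2 | h2
    · exact h0 ⟨h, h', by simpa [sgn] using h2⟩
    · exact h1 ⟨h, h', by simpa [sgn] using h2⟩
  have hDconn : PreconnectedSpace D := by
    refine isPreconnected_iff_preconnectedSpace.1
      ((Topology.IsInducing.subtypeVal.isPreconnected_image (s := D)).1 ?_)
    convert isConnected_compl_axis.isPreconnected using 1
    ext v
    constructor
    · rintro ⟨w, hw, rfl⟩; exact hw
    · intro hv
      exact ⟨⟨v, by rintro rfl; exact hv ⟨rfl, rfl⟩⟩, hv, rfl⟩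
  -- Both lifts are normalized at the same base point of the overlap.
  let a : {v : Fin 3 → ℝ // v ≠ 0} := ⟨![1, 0, 0], fun h => one_ne_zero (congrFun h 0)⟩
  have ha : a ∈ D := fun h => one_ne_zero h.1
  obtain ⟨e, he⟩ := hsurj (f a)
  have hlift (b : Bool) : ∃ F : C(S b, E), F ⟨a, hDS b ha⟩ = e ∧ p ∘ F = f.restrict (S b) :=
    (hp.existsUnique_continuousMap_lifts (f.restrict (S b)) ⟨a, hDS b ha⟩ e he).exists
  choose φ hφa hφ using hlift
  have hφ' (b : Bool) (v : S b) : p (φ b v) = f v := congrFun (hφ b) v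
  have hagree (b b' : Bool) : 
      (fun d : D => φ b ⟨d, hDS b d.2⟩) = fun d : D => φ b' ⟨d, hDS b' d.2⟩ := by
    refine hp.eq_of_comp_eq ?_ ?_ ?_ (⟨a, ha⟩ : D) ?_
    · exact (φ b).continuous.comp (by fun_prop)
    · exact (φ b').continuous.comp (by fun_prop)
    · funext d
      exact (hφ' b ⟨d, hDS b d.2⟩).trans (hφ' b' ⟨d, hDS b' d.2⟩).symm
    · exact (hφa b).trans (hφa b').symm
  have hcompat (b b' : Bool) (v) (hb : v ∈ S b) (hb' : v ∈ S b') :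
      φ b ⟨v, hb⟩ = φ b' ⟨v, hb'⟩ := by
    by_cases hbb : b = b'
    · subst hbb; rfl
    · have hv : v ∈ D := by
        cases b <;> cases b' <;> simp_all
      exact congrFun (hagree b b') (⟨v, hv⟩ : D)
  have hcover (v : {v : Fin 3 → ℝ // v ≠ 0}) : ∃ b, v ∈ S b := by
    by_contra! h
    obtain ⟨h0, h1, h2⟩ := not_not.1 (h true)
    obtain ⟨-, -, h3⟩ := not_not.1 (h false)
    refine v.2 (funext fun i => ?_)
    fin_cases i
    · exact h0
    · exact h1
    · simp only [sgn] at h2 h3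
      norm_num at h2 h3
      exact le_antisymm h2 h3
  refine ⟨ContinuousMap.liftCover S φ hcompat fun v => ?_, fun v => ?_⟩
  · obtain ⟨b, hb⟩ := hcover v
    exact ⟨b, (hSopen b).mem_nhds hb⟩
  · obtain ⟨b, hb⟩ := hcover v
    have := ContinuousMap.liftCover_coe (S := S) (φ := φ) (hφ := hcompat)
      (hS := fun v => (hcover v).imp fun b hb => (hSopen b).mem_nhds hb) ⟨v, hb⟩
    rw [this]
    exact hφ' b _

/-! ### The singular points -/

/-- The image of a fixed point `(z, 0)` is not a manifold point: over a punctured chart the double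
cover would have a section, which would distinguish `y` from `-y` continuously along a circle
`{z} × {|y| = ε}`. -/
lemma not_isManifoldPt_of_inv_eq_self {z : Circle} (hz : z⁻¹ = z) :
    ¬ IsManifoldPt 3 (Quot.mk MptRel (z, 0)) := by
  rw [isManifoldPt_iff]
  rintro ⟨χ, hχ⟩
  -- A parametrized neighbourhood of the point containing no other singular point.
  have hN : {x : Mpt | x ∈ singSet → x = Quot.mk MptRel (z, 0)} ∈ 𝓝 (Quot.mk MptRel (z, 0)) := by
    refine IsOpen.mem_nhds (isQuotientMap_quot_mk.isOpen_preimage.1 ?_) fun _ => rfl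
    rw [← isClosed_compl_iff]
    refine (finite_setOf_conjNeg_eq_self.subset fun p hp => ?_).isClosed
    by_contra h
    exact hp fun h' => absurd (mk_mem_singSet_iff.1 h') h
  obtain ⟨κ, hsrc, h0, htgt⟩ := exists_parametrization χ hχ hN
  have hκsymm {x : Mpt} (hx : x ∈ κ.target) (hx' : x ∉ singSet) : κ.symm x ≠ 0 := by
    intro h
    apply hx'
    rw [← κ.right_inv hx, h, h0, mk_mem_singSet_iff, conjNeg_eq_self_iff]
    exact ⟨hz, rfl⟩
  have hκcont : Continuous κ := by
    rw [← continuousOn_univ, ← hsrc]; exact κ.continuousOn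
  have hκ (v : {v : Fin 3 → ℝ // v ≠ 0}) : κ v ∈ singSetᶜ := by
    intro h
    have h1 : κ v = κ 0 := (htgt (κ.map_source (hsrc ▸ mem_univ v.1)) h).trans h0.symm
    exact v.2 (κ.injOn (hsrc ▸ mem_univ _) (hsrc ▸ mem_univ _) h1)
  -- The resulting section of the double cover over the punctured neighbourhood.
  obtain ⟨F, hF⟩ := exists_lift_of_punctured isCoveringMapOn_mk.isCoveringMap_restrictPreimage
    (by
      rintro ⟨x, hx⟩
      induction x using Quot.ind with | mk p =>
      exact ⟨⟨p, hx⟩, rfl⟩)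
    ⟨fun v => ⟨κ v, hκ v⟩, by fun_prop⟩
  have hF' (v) : Quot.mk MptRel (F v).1 = κ v := congrArg Subtype.val (hF v)
  -- A small circle `{z} × {|y| = ε}`, on which the involution is the antipodal map.
  obtain ⟨ε, hε, hball⟩ : ∃ ε > 0, ∀ y : ℂ, ‖y‖ = ε → Quot.mk MptRel (z, y) ∈ κ.target := by
    have hcont : Continuous fun y : ℂ => Quot.mk MptRel (z, y) :=
      continuous_quot_mk.comp (by fun_prop)
    have hopen : IsOpen {y : ℂ | Quot.mk MptRel (z, y) ∈ κ.target} := κ.open_target.preimage hcont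
    have h0mem : (0 : ℂ) ∈ {y : ℂ | Quot.mk MptRel (z, y) ∈ κ.target} := by
      change Quot.mk MptRel (z, 0) ∈ κ.target
      rw [← h0]
      exact κ.map_source (hsrc ▸ mem_univ _)
    obtain ⟨r, hr, h⟩ := Metric.isOpen_iff.1 hopen 0 h0mem
    refine ⟨r / 2, by positivity, fun y hy => h ?_⟩
    rw [mem_ball_zero_iff, hy]
    linarith
  have hcirc (w : Circle) : Quot.mk MptRel (z, ε * (w : ℂ)) ∈ κ.target :=
    hball _ (by simp [abs_of_pos hε, Circle.norm_coe])
  have hεw (w : Circle) : (ε : ℂ) * w ≠ 0 :=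
    mul_ne_zero (by exact_mod_cast hε.ne') w.coe_ne_zero
  have hcirc' (w : Circle) : Quot.mk MptRel (z, ε * (w : ℂ)) ∉ singSet := by
    rw [mk_mem_singSet_iff, conjNeg_eq_self_iff]
    exact fun h => hεw w h.2
  let g : Circle → ℂ := fun w => (F ⟨κ.symm (Quot.mk MptRel (z, ε * (w : ℂ))),
    hκsymm (hcirc w) (hcirc' w)⟩).1.2
  have hgcont : Continuous g := by
    have h1 : Continuous fun w : Circle => κ.symm (Quot.mk MptRel (z, ε * (w : ℂ))) :=
      κ.continuousOn_symm.comp_continuous (continuous_quot_mk.comp (by fun_prop)) hcirc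
    have h2 : Continuous fun w : Circle => F ⟨κ.symm (Quot.mk MptRel (z, ε * (w : ℂ))),
      hκsymm (hcirc w) (hcirc' w)⟩ := F.continuous.comp (h1.subtype_mk _)
    exact continuous_snd.comp (continuous_subtype_val.comp h2)
  have hg (w : Circle) : g w = ε * w ∨ g w = -(ε * w) := by
    have h1 := hF' ⟨κ.symm (Quot.mk MptRel (z, ε * (w : ℂ))), hκsymm (hcirc w) (hcirc' w)⟩
    rw [κ.right_inv (hcirc w)] at h1
    rcases mk_eq_mk_iff.1 h1 with h1 | h1
    · exact Or.inl (congrArg Prod.snd h1)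
    · exact Or.inr (congrArg Prod.snd h1)
  have hgneg (w w' : Circle) (h : (w' : ℂ) = -w) : g w' = g w := by
    have h1 : Quot.mk MptRel (z, ε * (w' : ℂ)) = Quot.mk MptRel (z, ε * (w : ℂ)) := by
      rw [mk_eq_mk_iff]
      right
      simp [conjNeg, hz, h]
    simp only [g, h1]
  -- The sign `q` is continuous with values `±1`, hence constant, but it is also odd.
  let q : Circle → ℂ := fun w => g w / (ε * w)
  have hqcont : Continuous q := hgcont.div (by fun_prop) hεw
  have hq (w : Circle) : q w = 1 ∨ q w = -1 := by
    rcases hg w with h | h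
    · left; simp only [q, h]; exact div_self (hεw w)
    · right; simp only [q, h]; rw [neg_div, div_self (hεw w)]
  have hconst : q circleNegOne = q 1 := by
    have hdisc : IsDiscrete ({1, -1} : Set ℂ) := (toFinite _).isDiscrete
    exact isPreconnected_univ.constant_of_mapsTo hdisc hqcont.continuousOn
      (fun w _ => hq w) (mem_univ _) (mem_univ _)
  have hodd : q circleNegOne = -q 1 := by
    have hc : (circleNegOne : ℂ) = -((1 : Circle) : ℂ) := by simp [circleNegOne]
    simp only [q, hgneg 1 circleNegOne hc, hc, mul_neg, div_neg]
  rcases hq 1 with h | h <;> rw [hodd, h] at hconst <;> norm_num at hconst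

/-- In `M_pt = (S¹ × ℝ²)/((z, y) ∼ (z̄, −y))` the two points `p₊ = [(1, 0)]` and
`p₋ = [(−1, 0)]` admit no open neighborhood homeomorphic to `ℝ³`, while every other
point does: `M_pt` is a topological `3`-manifold away from exactly the two
topologically singular points `p₊`, `p₋`. -/
theorem statement17 :
    ¬ IsManifoldPt 3 pPlus ∧ ¬ IsManifoldPt 3 pMinus ∧
      ∀ x : Mpt, x ≠ pPlus → x ≠ pMinus → IsManifoldPt 3 x := by
  refine ⟨not_isManifoldPt_of_inv_eq_self inv_one,
    not_isManifoldPt_of_inv_eq_self (circle_inv_eq_self_iff.2 (Or.inr rfl)),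
    fun x hp hm => isManifoldPt_of_notMem_singSet ?_⟩
  rw [singSet_eq]
  rintro (h | h)
  exacts [hp h, hm h]
end
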